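/- There is a universal constant C ∈ (0,∞) such that for every p, q ∈ [1,∞), every Banach space (X,‖·‖_X), and every smooth compactly supported f : ℍ(ℝ) → X, (∫₀^∞ (∫_{ℍ(ℝ)} ‖f(hc^t) − f(h)‖_X^p dμ(h))^{q/p} dt/t^{1+q/2})^{1/q} ≤ C (∫₀^∞ t^{q−1} ‖Q_t * ∇_ℍ f‖_{L_p(ℍ(ℝ),ℓ_p²(X))}^q dt)^{1/q}. -/

import Mathlib

open MeasureTheory

/-- The real Heisenberg group `ℍ(ℝ)`, identified with `ℝ³`; the Lebesgue measure
(`volume`) is a Haar measure for the Heisenberg group structure. -/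
abbrev HR : Type := ℝ × ℝ × ℝ

namespace HR

/-- Right translation by the central element `c^t`: `h ↦ h·c^t`. -/
def vmul (t : ℝ) (h : HR) : HR := (h.1, h.2.1, h.2.2 + t)

/-- The Poisson kernel `P_t(u) = t/(π(t²+u²))` on `ℝ`. -/
noncomputable def Pker (t u : ℝ) : ℝ := t / (Real.pi * (t ^ 2 + u ^ 2))

/-- `Q_t(u) = ∂P_t/∂t(u) = (u²−t²)/(π(t²+u²)²)`. -/
noncomputable def Qker (t u : ℝ) : ℝ := (u ^ 2 - t ^ 2) / (Real.pi * (t ^ 2 + u ^ 2) ^ 2)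

variable {X : Type*} [NormedAddCommGroup X] [NormedSpace ℝ X]

/-- Convolution of a kernel `ψ : ℝ → ℝ` with `g : ℍ(ℝ) → X` along the center:
`(ψ*g)(x,y,z) = ∫_ℝ ψ(u) g(x,y,z−u) du`. -/
noncomputable def conv (ψ : ℝ → ℝ) (g : HR → X) (h : HR) : X :=
  ∫ u : ℝ, ψ u • g (h.1, h.2.1, h.2.2 - u)

/-- The left-invariant horizontal derivative `∂_a f = ∂f/∂x`. -/
noncomputable def da (f : HR → X) (h : HR) : X := fderiv ℝ f h (1, 0, 0)

/-- The left-invariant horizontal derivative `∂_b f = ∂f/∂y + x·∂f/∂z`. -/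
noncomputable def db (f : HR → X) (h : HR) : X :=
  fderiv ℝ f h (0, 1, 0) + h.1 • fderiv ℝ f h (0, 0, 1)

end HR

/-!
Both sides are Besov-type norms `(∫₀^∞ (t^(-θ) F(t))^q dt/t)^(1/q)` in the scale `t`, so it suffices
to compare the profiles `F` scale by scale: by Minkowski's inequality a bound of `F(t)` by a sum or
an integral of dilates of `G` costs only the norms of the dilations.

Comparing `f` with its average `P_t * f` and using the semigroup identity `P_{2s} = P_s * P_s`,
the increment `‖f(h c^t) - f(h)‖` is controlled by a sum of `‖P_s * f - f‖` over the dyadic scales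
`s = 2^k t`. Since `∂P_s/∂s = Q_s`, the latter is at most `∫₀^s ‖Q_r * f‖ dr`, and Hardy's
inequality passes to `‖Q_s * f‖`. Finally `c^u` is a commutator of two horizontal elements of
length `√|u|`, so `‖P_s * g - g‖ ≲ √s ‖∇_ℍ g‖`; applied to `g = Q_s * f`, for which
`P_s * g = Q_{2s} * f`, this bounds `‖Q_s * f‖` by `‖Q_{2s} * f‖ + √s ‖Q_s * ∇_ℍ f‖`, and iterating
over dyadic scales gives the theorem.
-/

section Minkowski

open scoped ENNReal

variable {α β : Type*} [MeasurableSpace α] [MeasurableSpace β] {μ : Measure α} {ν : Measure β}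
  {p : ℝ≥0∞}

lemma measurable_eLpNorm_prod_right {F : α → β → ℝ≥0∞} [SFinite ν]
    (hF : Measurable (Function.uncurry F)) (p : ℝ≥0∞) :
    Measurable fun a => eLpNorm (F a) p ν := by
  rcases eq_or_ne p 0 with rfl | hp0
  · simp
  rcases eq_or_ne p ⊤ with rfl | hp
  · simp only [eLpNorm_exponent_top, eLpNormEssSup_eq_essSup_enorm, enorm_eq_self]
    refine measurable_of_Ioi fun c => ?_
    have hset : MeasurableSet {x : α × β | c < F x.1 x.2} := measurableSet_lt measurable_const hF
    have heq : (fun a => essSup (F a) ν) ⁻¹' Set.Ioi c =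
        (fun a => ν (Prod.mk a ⁻¹' {x : α × β | c < F x.1 x.2})) ⁻¹' {0}ᶜ := by
      ext a
      have : essSup (F a) ν ≤ c ↔ ∀ᵐ b ∂ν, F a b ≤ c :=
        ⟨fun h => (ENNReal.ae_le_essSup (F a)).mono fun b hb => hb.trans h, essSup_le_of_ae_le c⟩
      simp [← not_le, this, ae_iff]
    rw [heq]
    exact measurable_measure_prodMk_left hset (measurableSet_singleton 0).compl
  · simp only [eLpNorm_eq_lintegral_rpow_enorm_toReal hp0 hp, enorm_eq_self]
    exact ((hF.pow_const _).lintegral_prod_right').pow_const _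

lemma lintegral_mul_rpow_le {w g : α → ℝ≥0∞} (hw : Measurable w) (hg : Measurable g) {r : ℝ}
    (hr : 1 ≤ r) :
    (∫⁻ a, w a * g a ∂μ) ^ r ≤ (∫⁻ a, w a * g a ^ r ∂μ) * (∫⁻ a, w a ∂μ) ^ (r - 1) := by
  have hr0 : 0 < r := by linarith
  have h := eLpNorm'_le_eLpNorm'_mul_rpow_measure_univ (μ := μ.withDensity w) (f := g)
    one_pos hr hg.aestronglyMeasurable
  simp only [eLpNorm'_eq_lintegral_enorm, enorm_eq_self, ENNReal.rpow_one, div_one,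
    lintegral_withDensity_eq_lintegral_mul _ hw hg, withDensity_apply _ MeasurableSet.univ,
    lintegral_withDensity_eq_lintegral_mul _ hw (hg.pow_const r), setLIntegral_univ] at h
  have h' := ENNReal.rpow_le_rpow h hr0.le
  rwa [ENNReal.mul_rpow_of_nonneg _ _ hr0.le, ← ENNReal.rpow_mul, ← ENNReal.rpow_mul,
    one_div_mul_cancel hr0.ne', ENNReal.rpow_one,
    show (1 - 1 / r) * r = r - 1 by field_simp] at h'

lemma ae_le_eLpNorm_mul_div {f : β → ℝ≥0∞} (hf : Measurable f) (hp : p ≠ 0)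
    (hfin : eLpNorm f p ν ≠ ⊤) : ∀ᵐ b ∂ν, f b ≤ eLpNorm f p ν * (f b / eLpNorm f p ν) := by
  rcases eq_or_ne (eLpNorm f p ν) 0 with h0 | h0
  · filter_upwards [(eLpNorm_eq_zero_iff hf.aestronglyMeasurable hp).1 h0] with b hb
    simp [hb]
  · exact .of_forall fun b => (ENNReal.mul_div_cancel h0 hfin).ge

lemma lintegral_div_eLpNorm_rpow_le_one {f : β → ℝ≥0∞} (hf : Measurable f) (hp0 : p ≠ 0)
    (hp : p ≠ ⊤) : ∫⁻ b, (f b / eLpNorm f p ν) ^ p.toReal ∂ν ≤ 1 := by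
  have hr : 0 < p.toReal := ENNReal.toReal_pos hp0 hp
  have hN : ∫⁻ b, f b ^ p.toReal ∂ν = eLpNorm f p ν ^ p.toReal := by
    simp only [eLpNorm_eq_lintegral_rpow_enorm_toReal hp0 hp, enorm_eq_self, ← ENNReal.rpow_mul,
      one_div_mul_cancel hr.ne', ENNReal.rpow_one]
  simp only [div_eq_mul_inv, ENNReal.mul_rpow_of_nonneg _ _ hr.le, ENNReal.inv_rpow]
  rw [lintegral_mul_const _ (hf.pow_const _), hN]
  exact ENNReal.mul_inv_le_one _

lemma ae_ae_le_eLpNorm_mul_div [SFinite μ] [SFinite ν] {F : α → β → ℝ≥0∞}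
    (hF : Measurable (Function.uncurry F)) (hp : p ≠ 0)
    (hfin : ∫⁻ a, eLpNorm (F a) p ν ∂μ ≠ ⊤) :
    ∀ᵐ b ∂ν, ∀ᵐ a ∂μ, F a b ≤ eLpNorm (F a) p ν * (F a b / eLpNorm (F a) p ν) := by
  have hN := measurable_eLpNorm_prod_right (ν := ν) hF p
  have hset : MeasurableSet {x : α × β |
      F x.1 x.2 ≤ eLpNorm (F x.1) p ν * (F x.1 x.2 / eLpNorm (F x.1) p ν)} :=
    measurableSet_le hF ((hN.comp measurable_fst).mul (hF.div (hN.comp measurable_fst)))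
  refine (Measure.ae_ae_comm hset).1 ?_
  filter_upwards [ae_lt_top hN hfin] with a ha
  exact ae_le_eLpNorm_mul_div (hF.comp measurable_prodMk_left) hp ha.ne

lemma lintegral_rpow_lintegral_le [SFinite μ] [SFinite ν] {F : α → β → ℝ≥0∞}
    (hF : Measurable (Function.uncurry F)) (hp1 : 1 ≤ p) (hp : p ≠ ⊤) :
    ∫⁻ b, (∫⁻ a, F a b ∂μ) ^ p.toReal ∂ν ≤ (∫⁻ a, eLpNorm (F a) p ν ∂μ) ^ p.toReal := by
  have hp0 : p ≠ 0 := (one_pos.trans_le hp1).ne'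
  have hr1 : 1 ≤ p.toReal := (ENNReal.one_le_ofReal.1 (by rwa [ENNReal.ofReal_toReal hp]))
  have hr : 0 < p.toReal := one_pos.trans_le hr1
  set r := p.toReal
  set N : α → ℝ≥0∞ := fun a => eLpNorm (F a) p ν
  have hN : Measurable N := measurable_eLpNorm_prod_right hF p
  rcases eq_or_ne (∫⁻ a, N a ∂μ) ⊤ with hW | hW
  · simp [hW, hr]
  have hdiv : Measurable (Function.uncurry fun b a => N a * (F a b / N a) ^ r) :=
    (hN.comp measurable_snd).mul
      (((hF.comp measurable_swap).div (hN.comp measurable_snd)).pow_const r)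
  calc ∫⁻ b, (∫⁻ a, F a b ∂μ) ^ r ∂ν
      ≤ ∫⁻ b, (∫⁻ a, N a * (F a b / N a) ^ r ∂μ) * (∫⁻ a, N a ∂μ) ^ (r - 1) ∂ν := by
        refine lintegral_mono_ae ?_
        filter_upwards [ae_ae_le_eLpNorm_mul_div hF hp0 hW] with b hb
        exact (ENNReal.rpow_le_rpow (lintegral_mono_ae hb) hr.le).trans
          (lintegral_mul_rpow_le hN ((hF.comp measurable_prodMk_right).div hN) hr1)
    _ = (∫⁻ a, N a * ∫⁻ b, (F a b / N a) ^ r ∂ν ∂μ) * (∫⁻ a, N a ∂μ) ^ (r - 1) := by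
        have hJ : Measurable fun b => ∫⁻ a, N a * (F a b / N a) ^ r ∂μ :=
          hdiv.lintegral_prod_right'
        rw [lintegral_mul_const _ hJ, lintegral_lintegral_swap hdiv.aemeasurable]
        congr 2 with a
        exact lintegral_const_mul _
          (((hF.comp measurable_prodMk_left).div_const _).pow_const _)
    _ ≤ (∫⁻ a, N a ∂μ) * (∫⁻ a, N a ∂μ) ^ (r - 1) := by
        gcongr with a
        exact mul_le_of_le_one_right'
          (lintegral_div_eLpNorm_rpow_le_one (hF.comp measurable_prodMk_left) hp0 hp)
    _ = (∫⁻ a, N a ∂μ) ^ r := by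
        nth_rewrite 1 [← ENNReal.rpow_one (∫⁻ a, N a ∂μ)]
        rw [← ENNReal.rpow_add_of_nonneg _ _ zero_le_one (by linarith), add_sub_cancel]

lemma eLpNorm_lintegral_le [SFinite μ] [SFinite ν] {F : α → β → ℝ≥0∞}
    (hF : Measurable (Function.uncurry F)) (hp1 : 1 ≤ p) :
    eLpNorm (fun b => ∫⁻ a, F a b ∂μ) p ν ≤ ∫⁻ a, eLpNorm (F a) p ν ∂μ := by
  rcases eq_or_ne p ⊤ with rfl | hp
  · have hset : MeasurableSet {x : α × β | F x.1 x.2 ≤ eLpNorm (F x.1) ⊤ ν} :=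
      measurableSet_le hF ((measurable_eLpNorm_prod_right hF ⊤).comp measurable_fst)
    have hle : ∀ᵐ b ∂ν, ∀ᵐ a ∂μ, F a b ≤ eLpNorm (F a) ⊤ ν :=
      (Measure.ae_ae_comm hset).1 (.of_forall fun a => by
        simpa only [eLpNorm_exponent_top, enorm_eq_self] using ae_le_eLpNormEssSup (f := F a))
    rw [eLpNorm_exponent_top, eLpNormEssSup_eq_essSup_enorm]
    exact essSup_le_of_ae_le _ (hle.mono fun b hb => lintegral_mono_ae hb)
  · have hp0 : p ≠ 0 := (one_pos.trans_le hp1).ne'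
    have hr : 0 < p.toReal := ENNReal.toReal_pos hp0 hp
    rw [eLpNorm_eq_lintegral_rpow_enorm_toReal hp0 hp, one_div, ENNReal.rpow_inv_le_iff hr]
    simpa only [enorm_eq_self] using lintegral_rpow_lintegral_le hF hp1 hp

lemma eLpNorm_integral_le [SFinite μ] [SFinite ν] {E : Type*} [NormedAddCommGroup E]
    [NormedSpace ℝ E] {k : α → β → E} (hk : StronglyMeasurable (Function.uncurry k))
    (hp : 1 ≤ p) :
    eLpNorm (fun b => ∫ a, k a b ∂μ) p ν ≤ ∫⁻ a, eLpNorm (k a) p ν ∂μ :=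
  calc eLpNorm (fun b => ∫ a, k a b ∂μ) p ν
      ≤ eLpNorm (fun b => ∫⁻ a, ‖k a b‖ₑ ∂μ) p ν :=
        eLpNorm_mono_enorm fun b => by simpa using enorm_integral_le_lintegral_enorm fun a => k a b
    _ ≤ ∫⁻ a, eLpNorm (fun b => ‖k a b‖ₑ) p ν ∂μ := eLpNorm_lintegral_le hk.enorm hp
    _ = ∫⁻ a, eLpNorm (k a) p ν ∂μ := by simp only [eLpNorm_enorm]

lemma eLpNorm_integral_smul_le [SFinite μ] [SFinite ν] {E : Type*} [NormedAddCommGroup E]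
    [NormedSpace ℝ E] {ψ : α → ℝ} {k : α → β → E} (hψ : Measurable ψ)
    (hk : StronglyMeasurable (Function.uncurry k)) (hp : 1 ≤ p) :
    eLpNorm (fun b => ∫ a, ψ a • k a b ∂μ) p ν ≤ ∫⁻ a, ‖ψ a‖ₑ * eLpNorm (k a) p ν ∂μ := by
  have hψk : StronglyMeasurable (Function.uncurry fun a b => ψ a • k a b) :=
    (hψ.comp measurable_fst).stronglyMeasurable.smul hk
  exact (eLpNorm_integral_le hψk hp).trans_eq
    (lintegral_congr fun a => eLpNorm_const_smul (ψ a) (k a) p ν)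

end Minkowski

lemma lintegral_comp_mul_left_of_pos {g : ℝ → ENNReal} (hg : Measurable g) {a : ℝ} (ha : 0 < a) :
    ∫⁻ x, g (a * x) = ENNReal.ofReal a⁻¹ * ∫⁻ x, g x := by
  rw [← lintegral_map hg (measurable_const_mul a), Real.map_volume_mul_left ha.ne',
    lintegral_smul_measure, abs_of_pos (inv_pos.2 ha), smul_eq_mul]

namespace HR

section PoissonKernel

open scoped FourierTransform Real Convolution

lemma Pker_pos {t : ℝ} (ht : 0 < t) (u : ℝ) : 0 < Pker t u := by
  unfold Pker; positivity

lemma Pker_eq_cauchyPDFReal {t : ℝ} (ht : 0 < t) :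
    Pker t = ProbabilityTheory.cauchyPDFReal 0 t.toNNReal := by
  ext u
  rw [ProbabilityTheory.cauchyPDFReal_def, Pker, Real.coe_toNNReal t ht.le,
    sub_zero]
  field_simp
  ring

lemma integrable_Pker {t : ℝ} (ht : 0 < t) : Integrable (Pker t) := by
  rw [Pker_eq_cauchyPDFReal ht]
  exact ProbabilityTheory.integrable_cauchyPDFReal 0

lemma integral_Pker {t : ℝ} (ht : 0 < t) : ∫ u, Pker t u = 1 := by
  rw [Pker_eq_cauchyPDFReal ht]
  exact ProbabilityTheory.integral_cauchyPDFReal_eq_one 0 (Real.toNNReal_pos.2 ht).ne'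

lemma lintegral_enorm_Pker {t : ℝ} (ht : 0 < t) : ∫⁻ u, ‖Pker t u‖ₑ = 1 := by
  simp_rw [Real.enorm_of_nonneg (Pker_pos ht _).le]
  rw [← ofReal_integral_eq_lintegral_ofReal (integrable_Pker ht) (.of_forall fun u =>
    (Pker_pos ht u).le), integral_Pker ht, ENNReal.ofReal_one]

lemma continuous_Pker {t : ℝ} (ht : 0 < t) : Continuous (Pker t) :=
  continuous_const.div (by fun_prop) fun u => by positivity

lemma Pker_le {t : ℝ} (ht : 0 < t) (u : ℝ) : Pker t u ≤ 1 / (π * t) := by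
  rw [Pker, div_le_div_iff₀ (by positivity) (by positivity)]
  nlinarith [mul_nonneg Real.pi_pos.le (sq_nonneg u)]

lemma Pker_mul_left {s : ℝ} (hs : 0 < s) (u : ℝ) : Pker s (s * u) = s⁻¹ * Pker 1 u := by
  unfold Pker; field_simp

lemma abs_Pker_add_sub_le {s t : ℝ} (hs : 0 < s) (ht : 0 ≤ t) (u : ℝ) :
    |Pker s (u + t) - Pker s u| ≤ t / (2 * s) * (Pker s (u + t) + Pker s u) := by
  have : 0 < s ^ 2 + (u + t) ^ 2 := by positivity
  have : 0 < s ^ 2 + u ^ 2 := by positivity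
  have hdiff : Pker s (u + t) - Pker s u =
      -(t * (s * (u + (u + t))) / (π * ((s ^ 2 + (u + t) ^ 2) * (s ^ 2 + u ^ 2)))) := by
    unfold Pker; field_simp; ring
  have hsum : t / (2 * s) * (Pker s (u + t) + Pker s u) =
      t * ((s ^ 2 + (u + t) ^ 2 + (s ^ 2 + u ^ 2)) / 2) /
        (π * ((s ^ 2 + (u + t) ^ 2) * (s ^ 2 + u ^ 2))) := by
    unfold Pker; field_simp; ring
  rw [hdiff, hsum, abs_neg, abs_div, abs_mul, abs_of_nonneg ht,
    abs_of_pos (a := π * _) (by positivity)]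
  gcongr
  rw [abs_le]
  constructor <;> nlinarith [sq_nonneg (s - u), sq_nonneg (s + u),
    sq_nonneg (s - (u + t)), sq_nonneg (s + (u + t))]

lemma hasDerivAt_Pker {t : ℝ} (ht : 0 < t) (u : ℝ) :
    HasDerivAt (fun t => Pker t u) (Qker t u) t := by
  have h : π * (t ^ 2 + u ^ 2) ≠ 0 := by positivity
  refine ((hasDerivAt_id' t).div
    (((hasDerivAt_pow 2 t).add_const (u ^ 2)).const_mul π) h).congr_deriv ?_
  rw [Qker]
  field_simp
  ring

lemma measurable_uncurry_Pker : Measurable (Function.uncurry Pker) := by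
  unfold Pker Function.uncurry
  fun_prop

lemma measurable_uncurry_Qker : Measurable (Function.uncurry Qker) := by
  unfold Qker Function.uncurry
  fun_prop

lemma abs_Qker_le_of_le {s t : ℝ} (hs : 0 < s) (hst : s ≤ t) (u : ℝ) :
    |Qker t u| ≤ Pker s u / s := by
  have ht : 0 < t := hs.trans_le hst
  calc |Qker t u| = |u ^ 2 - t ^ 2| / (π * (t ^ 2 + u ^ 2) ^ 2) := by
        rw [Qker, abs_div, abs_of_pos (a := π * _) (by positivity)]
    _ ≤ (t ^ 2 + u ^ 2) / (π * (t ^ 2 + u ^ 2) ^ 2) := by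
        gcongr
        exact abs_le.2 ⟨by nlinarith [sq_nonneg u], by nlinarith [sq_nonneg t]⟩
    _ = 1 / (π * (t ^ 2 + u ^ 2)) := by field_simp
    _ ≤ 1 / (π * (s ^ 2 + u ^ 2)) := by gcongr
    _ = Pker s u / s := by unfold Pker; field_simp

lemma integrable_Qker {t : ℝ} (ht : 0 < t) : Integrable (Qker t) :=
  ((integrable_Pker ht).div_const t).mono'
    measurable_uncurry_Qker.of_uncurry_left.aestronglyMeasurable
    (.of_forall (abs_Qker_le_of_le ht le_rfl))

lemma lintegral_enorm_Qker_le {t : ℝ} (ht : 0 < t) :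
    ∫⁻ u, ‖Qker t u‖ₑ ≤ ENNReal.ofReal t⁻¹ := by
  calc ∫⁻ u, ‖Qker t u‖ₑ ≤ ∫⁻ u, ENNReal.ofReal t⁻¹ * ‖Pker t u‖ₑ :=
        lintegral_mono fun u => by
          rw [Real.enorm_of_nonneg (Pker_pos ht u).le, Real.enorm_eq_ofReal_abs,
            ← ENNReal.ofReal_mul (by positivity)]
          exact ENNReal.ofReal_le_ofReal
            ((abs_Qker_le_of_le ht le_rfl u).trans_eq (div_eq_inv_mul _ _))
    _ = ENNReal.ofReal t⁻¹ := by
        rw [lintegral_const_mul' _ _ ENNReal.ofReal_ne_top, lintegral_enorm_Pker ht, mul_one]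

lemma hasDerivAt_integral_Pker_smul {E : Type*} [NormedAddCommGroup E] [NormedSpace ℝ E]
    {φ : ℝ → E} (hφ : AEStronglyMeasurable φ) {C : ℝ} (hC : ∀ u, ‖φ u‖ ≤ C) {t : ℝ}
    (ht : 0 < t) :
    HasDerivAt (fun t => ∫ u, Pker t u • φ u) (∫ u, Qker t u • φ u) t := by
  have hball : ∀ x ∈ Metric.ball t (t / 2), t / 2 < x := fun x hx => by
    rw [Metric.mem_ball, Real.dist_eq, abs_lt] at hx
    linarith
  refine (hasDerivAt_integral_of_dominated_loc_of_deriv_le (F := fun t u => Pker t u • φ u)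
    (F' := fun t u => Qker t u • φ u) (Metric.ball_mem_nhds t (half_pos ht)) ?_ ?_ ?_ ?_
    (((integrable_Pker (half_pos ht)).div_const (t / 2)).mul_const C) ?_).2
  · filter_upwards [lt_mem_nhds ht] with x hx
    exact (continuous_Pker hx).aestronglyMeasurable.smul hφ
  · exact (integrable_Pker ht).smul_bdd C hφ (.of_forall hC)
  · exact (integrable_Qker ht).aestronglyMeasurable.smul hφ
  · refine .of_forall fun u x hx => ?_
    rw [norm_smul]
    exact mul_le_mul (abs_Qker_le_of_le (half_pos ht) (hball x hx).le u) (hC u) (norm_nonneg _)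
      (div_pos (Pker_pos (half_pos ht) u) (half_pos ht)).le
  · exact .of_forall fun u x hx =>
      (hasDerivAt_Pker ((half_pos ht).trans (hball x hx)) u).smul_const (φ u)

lemma eqOn_cexp_neg_mul_abs_add_Iic (c w : ℂ) :
    Set.EqOn (fun x : ℝ => Complex.exp (-c * |x| + w * x))
      (fun x : ℝ => Complex.exp ((w + c) * x)) (Set.Iic 0) := fun x hx => by
  simp only [abs_of_nonpos (Set.mem_Iic.1 hx), Complex.ofReal_neg]
  ring_nf

lemma eqOn_cexp_neg_mul_abs_add_Ioi (c w : ℂ) :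
    Set.EqOn (fun x : ℝ => Complex.exp (-c * |x| + w * x))
      (fun x : ℝ => Complex.exp ((w - c) * x)) (Set.Ioi 0) := fun x hx => by
  simp only [abs_of_pos (Set.mem_Ioi.1 hx)]
  ring_nf

lemma integrable_cexp_neg_mul_abs_add {c w : ℂ} (h : |w.re| < c.re) :
    Integrable fun x : ℝ => Complex.exp (-c * |x| + w * x) := by
  obtain ⟨hlt, hgt⟩ := abs_lt.1 h
  rw [← integrableOn_univ, ← Set.Iic_union_Ioi (a := (0 : ℝ))]
  exact ((integrableOn_exp_mul_complex_Iic (by simp; linarith) 0).congr_fun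
      (eqOn_cexp_neg_mul_abs_add_Iic c w).symm measurableSet_Iic).union
    ((integrableOn_exp_mul_complex_Ioi (by simp; linarith) 0).congr_fun
      (eqOn_cexp_neg_mul_abs_add_Ioi c w).symm measurableSet_Ioi)

lemma integral_cexp_neg_mul_abs_add {c w : ℂ} (h : |w.re| < c.re) :
    ∫ x : ℝ, Complex.exp (-c * |x| + w * x) = 2 * c / (c ^ 2 - w ^ 2) := by
  obtain ⟨hlt, hgt⟩ := abs_lt.1 h
  have hadd : 0 < (w + c).re := by simp; linarith
  have hsub : (w - c).re < 0 := by simp; linarith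
  have hadd0 : w + c ≠ 0 := fun h0 => by simp [h0] at hadd
  have hsub0 : w - c ≠ 0 := fun h0 => by simp [h0] at hsub
  have hprod : c ^ 2 - w ^ 2 ≠ 0 := by
    rw [show c ^ 2 - w ^ 2 = -((w + c) * (w - c)) by ring]
    exact neg_ne_zero.2 (mul_ne_zero hadd0 hsub0)
  have hint := integrable_cexp_neg_mul_abs_add h
  rw [← intervalIntegral.integral_Iic_add_Ioi hint.integrableOn hint.integrableOn,
    setIntegral_congr_fun measurableSet_Iic (eqOn_cexp_neg_mul_abs_add_Iic c w),
    setIntegral_congr_fun measurableSet_Ioi (eqOn_cexp_neg_mul_abs_add_Ioi c w),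
    integral_exp_mul_complex_Iic hadd, integral_exp_mul_complex_Ioi hsub]
  simp only [Complex.ofReal_zero, mul_zero, Complex.exp_zero]
  field_simp
  ring

lemma integrable_cexp_neg_abs {t : ℝ} (ht : 0 < t) :
    Integrable fun ξ : ℝ => Complex.exp (-(2 * π * t : ℝ) * |ξ|) := by
  simpa using integrable_cexp_neg_mul_abs_add (c := (2 * π * t : ℝ)) (w := 0)
    (by rw [Complex.ofReal_re, Complex.zero_re, abs_zero]; positivity)

lemma fourier_cexp_neg_abs {t : ℝ} (ht : 0 < t) (v : ℝ) :
    𝓕 (fun ξ : ℝ => Complex.exp (-(2 * π * t : ℝ) * |ξ|)) v = Pker t v := by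
  have hre : |(-(2 * π * v : ℝ) * Complex.I).re| < ((2 * π * t : ℝ) : ℂ).re := by
    rw [Complex.ofReal_re, ← Complex.ofReal_neg, Complex.re_ofReal_mul, Complex.I_re, mul_zero,
      abs_zero]
    positivity
  have hden : (t : ℂ) ^ 2 + (v : ℂ) ^ 2 ≠ 0 := by
    exact_mod_cast (by positivity : t ^ 2 + v ^ 2 ≠ 0)
  have hpi : (π : ℂ) ≠ 0 := by exact_mod_cast Real.pi_ne_zero
  calc 𝓕 (fun ξ : ℝ => Complex.exp (-(2 * π * t : ℝ) * |ξ|)) v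
      = ∫ ξ : ℝ, Complex.exp (-(2 * π * t : ℝ) * |ξ| + -(2 * π * v : ℝ) * Complex.I * ξ) := by
        rw [Real.fourier_eq']
        congr 1 with ξ
        simp only [smul_eq_mul, RCLike.inner_apply, conj_trivial, ← Complex.exp_add]
        push_cast
        ring_nf
    _ = 2 * (2 * π * t : ℝ) / ((2 * π * t : ℝ) ^ 2 - (-(2 * π * v : ℝ) * Complex.I) ^ 2) :=
        integral_cexp_neg_mul_abs_add hre
    _ = Pker t v := by
        rw [Pker, show ((2 * π * t : ℝ) : ℂ) ^ 2 - (-(2 * π * v : ℝ) * Complex.I) ^ 2 =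
          4 * π ^ 2 * (t ^ 2 + v ^ 2) by push_cast; rw [mul_pow _ Complex.I, Complex.I_sq]; ring]
        push_cast
        field_simp
        ring

lemma fourierInv_cexp_neg_abs {t : ℝ} (ht : 0 < t) :
    𝓕⁻ (fun ξ : ℝ => Complex.exp (-(2 * π * t : ℝ) * |ξ|)) = fun u : ℝ => (Pker t u : ℂ) := by
  ext u
  rw [Real.fourierInv_eq_fourier_neg, fourier_cexp_neg_abs ht]
  simp [Pker]

lemma fourier_Pker {t : ℝ} (ht : 0 < t) :
    𝓕 (fun u : ℝ => (Pker t u : ℂ)) = fun ξ : ℝ => Complex.exp (-(2 * π * t : ℝ) * |ξ|) := by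
  rw [← fourierInv_cexp_neg_abs ht]
  refine Continuous.fourier_fourierInv_eq (by fun_prop) (integrable_cexp_neg_abs ht) ?_
  rw [funext (fourier_cexp_neg_abs ht)]
  exact (integrable_Pker ht).ofReal

lemma Pker_convolution_Pker {s t : ℝ} (hs : 0 < s) (ht : 0 < t) :
    Pker s ⋆ Pker t = Pker (s + t) := by
  set Ps : ℝ → ℂ := fun u => Pker s u
  set Pt : ℝ → ℂ := fun u => Pker t u
  have hPs : Integrable Ps := (integrable_Pker hs).ofReal
  have hPt : Integrable Pt := (integrable_Pker ht).ofReal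
  have hF : 𝓕 (Ps ⋆[ContinuousLinearMap.mul ℂ ℂ] Pt) =
      fun ξ : ℝ => Complex.exp (-(2 * π * (s + t) : ℝ) * |ξ|) := by
    ext ξ
    rw [Real.fourier_mul_convolution_eq hPs hPt, fourier_Pker hs, fourier_Pker ht,
      ← Complex.exp_add]
    push_cast
    ring_nf
  have hcont : Continuous (Ps ⋆[ContinuousLinearMap.mul ℂ ℂ] Pt) := by
    refine BddAbove.continuous_convolution_right_of_integrable _
      ⟨1 / (π * t), Set.forall_mem_range.2 fun u => ?_⟩ hPs
      (Complex.continuous_ofReal.comp (continuous_Pker ht))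
    rw [Complex.norm_of_nonneg (Pker_pos ht u).le]
    exact Pker_le ht u
  have hconv : Ps ⋆[ContinuousLinearMap.mul ℂ ℂ] Pt = fun u : ℝ => (Pker (s + t) u : ℂ) := by
    rw [← fourierInv_cexp_neg_abs (add_pos hs ht), ← hF]
    refine (hcont.fourierInv_fourier_eq (hPs.integrable_convolution _ hPt) ?_).symm
    rw [hF]
    exact integrable_cexp_neg_abs (add_pos hs ht)
  ext v
  have := congrFun hconv v
  simp only [convolution_mul, Ps, Pt, ← Complex.ofReal_mul, integral_complex_ofReal] at this
  exact_mod_cast this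

lemma Pker_convolution_Qker {s t : ℝ} (hs : 0 < s) (ht : 0 < t) :
    Pker s ⋆ Qker t = Qker (s + t) := by
  ext v
  have hleft : HasDerivAt (fun t => (Pker s ⋆ Pker t) v) ((Pker s ⋆ Qker t) v) t := by
    simp only [convolution_lsmul_swap, smul_eq_mul, mul_comm (Pker s _)]
    refine hasDerivAt_integral_Pker_smul (C := 1 / (π * s))
      ((continuous_Pker hs).comp (continuous_const.sub continuous_id)).aestronglyMeasurable
      (fun u => ?_) ht
    rw [Function.comp_apply, Real.norm_of_nonneg (Pker_pos hs _).le]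
    exact Pker_le hs _
  have hright := (hasDerivAt_Pker (add_pos hs ht) v).comp_const_add s t
  refine hleft.unique (hright.congr_of_eventuallyEq ?_)
  filter_upwards [lt_mem_nhds ht] with r hr
  rw [Pker_convolution_Pker hs hr]

/-- The absolute moment `∫ P₁(u) |u|^θ du` of the Poisson kernel. At `θ = 1/2` it bounds the cost of
averaging the vertical displacement estimate, which is of order `|u|^{1/2}`, over `P₁`. -/
noncomputable def poissonMoment (θ : ℝ) : ENNReal :=
  ∫⁻ u : ℝ, ‖Pker 1 u‖ₑ * ENNReal.ofReal (|u| ^ θ)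

lemma poissonMoment_ne_top {θ : ℝ} (hθ0 : 0 ≤ θ) (hθ : θ < 1) : poissonMoment θ ≠ ⊤ := by
  have hint : Integrable fun u : ℝ => π⁻¹ * (1 + ‖u‖ ^ 2) ^ (-(2 - θ) / 2) :=
    (integrable_rpow_neg_one_add_norm_sq (by simp; linarith)).const_mul _
  refine ((lintegral_mono fun u => ?_).trans_lt hint.lintegral_lt_top).ne
  have hu : 0 < 1 + ‖u‖ ^ 2 := by positivity
  have hpow : |u| ^ θ ≤ (1 + ‖u‖ ^ 2) ^ (θ / 2) :=
    calc |u| ^ θ = (|u| ^ (2 : ℝ)) ^ (θ / 2) := by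
          rw [← Real.rpow_mul (abs_nonneg u), mul_div_cancel₀ _ two_ne_zero]
      _ ≤ (1 + ‖u‖ ^ 2) ^ (θ / 2) := by
          rw [Real.rpow_two, Real.norm_eq_abs]
          gcongr
          linarith
  rw [Real.enorm_of_nonneg (Pker_pos one_pos u).le, ← ENNReal.ofReal_mul (Pker_pos one_pos u).le]
  refine ENNReal.ofReal_le_ofReal ?_
  calc Pker 1 u * |u| ^ θ ≤ Pker 1 u * (1 + ‖u‖ ^ 2) ^ (θ / 2) := by
        gcongr
        exact (Pker_pos one_pos u).le
    _ = π⁻¹ * ((1 + ‖u‖ ^ 2) ^ (-1 : ℝ) * (1 + ‖u‖ ^ 2) ^ (θ / 2)) := by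
        rw [Real.rpow_neg_one, Real.norm_eq_abs, sq_abs, Pker]
        field_simp
    _ = π⁻¹ * (1 + ‖u‖ ^ 2) ^ (-(2 - θ) / 2) := by
        rw [← Real.rpow_add hu]
        ring_nf

lemma lintegral_Pker_mul_rpow {s : ℝ} (hs : 0 < s) (θ : ℝ) :
    ∫⁻ u, ‖Pker s u‖ₑ * ENNReal.ofReal (|u| ^ θ) = ENNReal.ofReal (s ^ θ) * poissonMoment θ := by
  have hm : Measurable fun u : ℝ => ‖Pker s u‖ₑ * ENNReal.ofReal (|u| ^ θ) :=
    (continuous_Pker hs).measurable.enorm.mul (by fun_prop)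
  have hscale (u : ℝ) : ‖Pker s (s * u)‖ₑ * ENNReal.ofReal (|s * u| ^ θ) =
      ENNReal.ofReal s⁻¹ * (ENNReal.ofReal (s ^ θ) * (‖Pker 1 u‖ₑ * ENNReal.ofReal (|u| ^ θ))) := by
    rw [Pker_mul_left hs, abs_mul, abs_of_pos hs, Real.mul_rpow hs.le (abs_nonneg u),
      ENNReal.ofReal_mul (by positivity), enorm_mul, Real.enorm_of_nonneg (inv_pos.2 hs).le]
    ring
  have h := lintegral_comp_mul_left_of_pos hm hs
  simp_rw [hscale] at h
  rwa [lintegral_const_mul' _ _ ENNReal.ofReal_ne_top,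
    ENNReal.mul_right_inj (by simpa using hs) ENNReal.ofReal_ne_top,
    lintegral_const_mul' _ _ ENNReal.ofReal_ne_top, eq_comm] at h

end PoissonKernel

section CentralConvolution

open scoped Convolution ENNReal

/-- Bounded strongly measurable functions: a class stable under translations and under
convolution along the center, on which convolutions with integrable kernels converge at every
point. -/
structure BoundedMeasurable {α E : Type*} [MeasurableSpace α] [NormedAddCommGroup E]
    (g : α → E) : Prop where
  stronglyMeasurable : StronglyMeasurable g
  exists_norm_le : ∃ C, ∀ x, ‖g x‖ ≤ C

namespace BoundedMeasurable

variable {α β E : Type*} [MeasurableSpace α] [MeasurableSpace β] [NormedAddCommGroup E]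

lemma sub {g k : α → E} (hg : BoundedMeasurable g) (hk : BoundedMeasurable k) :
    BoundedMeasurable fun x => g x - k x := by
  obtain ⟨C, hC⟩ := hg.exists_norm_le
  obtain ⟨D, hD⟩ := hk.exists_norm_le
  exact ⟨hg.stronglyMeasurable.sub hk.stronglyMeasurable, C + D, fun x =>
    (norm_sub_le _ _).trans (add_le_add (hC x) (hD x))⟩

lemma comp_measurable {g : α → E} (hg : BoundedMeasurable g) {T : β → α} (hT : Measurable T) :
    BoundedMeasurable fun x => g (T x) :=
  ⟨hg.stronglyMeasurable.comp_measurable hT,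
    hg.exists_norm_le.imp fun _ hC x => hC (T x)⟩

lemma integrable_smul [NormedSpace ℝ E] {g : α → E} (hg : BoundedMeasurable g) {μ : Measure α}
    {ψ : α → ℝ} (hψ : Integrable ψ μ) : Integrable (fun x => ψ x • g x) μ :=
  let ⟨C, hC⟩ := hg.exists_norm_le
  hψ.smul_bdd C hg.stronglyMeasurable.aestronglyMeasurable (.of_forall hC)

end BoundedMeasurable

variable {X : Type*} [NormedAddCommGroup X] {f g A : HR → X} {ψ : ℝ → ℝ} {p : ℝ≥0∞}

lemma measurable_uncurry_vmul : Measurable (Function.uncurry vmul) := by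
  unfold vmul Function.uncurry; fun_prop

lemma measurable_vmul (t : ℝ) : Measurable (vmul t) :=
  measurable_uncurry_vmul.of_uncurry_left

lemma vmul_vmul (s t : ℝ) (h : HR) : vmul s (vmul t h) = vmul (t + s) h := by
  simp [vmul, add_assoc]

lemma measurePreserving_add_right_prod (v : HR) : MeasurePreserving fun h : HR => h + v :=
  (measurePreserving_add_right volume v.1).prod (measurePreserving_add_right volume v.2)

lemma measurePreserving_vmul (t : ℝ) : MeasurePreserving (vmul t) := by
  convert measurePreserving_add_right_prod (0, 0, t) using 2 with h
  ext <;> simp [vmul]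

lemma eLpNorm_comp_vmul (hg : StronglyMeasurable g) (t : ℝ) :
    eLpNorm (fun h => g (vmul t h)) p = eLpNorm g p :=
  eLpNorm_comp_measurePreserving hg.aestronglyMeasurable (measurePreserving_vmul t)

lemma stronglyMeasurable_uncurry_comp_vmul (hg : StronglyMeasurable g) :
    StronglyMeasurable (Function.uncurry fun (u : ℝ) h => g (vmul u h)) :=
  hg.comp_measurable measurable_uncurry_vmul

lemma stronglyMeasurable_uncurry_comp_vmul_neg (hg : StronglyMeasurable g) :
    StronglyMeasurable (Function.uncurry fun (u : ℝ) h => g (vmul (-u) h)) :=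
  (stronglyMeasurable_uncurry_comp_vmul hg).comp_measurable
    (measurable_fst.neg.prodMk measurable_snd)

variable [NormedSpace ℝ X]

lemma conv_eq_integral_vmul (ψ : ℝ → ℝ) (g : HR → X) :
    conv ψ g = fun h => ∫ u, ψ u • g (vmul (-u) h) := by
  ext h
  simp only [conv, vmul, sub_eq_add_neg]

lemma BoundedMeasurable.integrable_smul_comp_vmul (hg : BoundedMeasurable g)
    (hψ : Integrable ψ) (h : HR) : Integrable fun u => ψ u • g (vmul (-u) h) :=
  (hg.comp_measurable
    (measurable_uncurry_vmul.comp (measurable_neg.prodMk measurable_const))).integrable_smul hψ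

lemma conv_sub_left {φ : ℝ → ℝ} (hψ : Integrable ψ) (hφ : Integrable φ)
    (hg : BoundedMeasurable g) (h : HR) :
    conv (fun u => ψ u - φ u) g h = conv ψ g h - conv φ g h := by
  simp only [conv_eq_integral_vmul, sub_smul]
  exact integral_sub (hg.integrable_smul_comp_vmul hψ h) (hg.integrable_smul_comp_vmul hφ h)

lemma conv_sub_right (hψ : Integrable ψ) (hf : BoundedMeasurable f) (hg : BoundedMeasurable g)
    (h : HR) : conv ψ (fun h => f h - g h) h = conv ψ f h - conv ψ g h := by
  simp only [conv_eq_integral_vmul, smul_sub]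
  exact integral_sub (hf.integrable_smul_comp_vmul hψ h) (hg.integrable_smul_comp_vmul hψ h)

lemma conv_vmul (ψ : ℝ → ℝ) (g : HR → X) (t : ℝ) (h : HR) :
    conv ψ g (vmul t h) = conv (fun u => ψ (u + t)) g h := by
  simp only [conv_eq_integral_vmul, vmul_vmul]
  rw [← integral_add_right_eq_self _ t]
  simp only [neg_add_rev, add_neg_cancel_left]

lemma stronglyMeasurable_uncurry_conv {K : ℝ → ℝ → ℝ} (hK : Measurable (Function.uncurry K))
    (hg : StronglyMeasurable g) :
    StronglyMeasurable (Function.uncurry fun (t : ℝ) h => conv (K t) g h) := by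
  simp only [conv_eq_integral_vmul]
  have hk : StronglyMeasurable fun x : (ℝ × HR) × ℝ => K x.1.1 x.2 • g (vmul (-x.2) x.1.2) :=
    (hK.comp (measurable_fst.fst.prodMk measurable_snd)).stronglyMeasurable.smul
      ((stronglyMeasurable_uncurry_comp_vmul_neg hg).comp_measurable
        (measurable_snd.prodMk measurable_fst.snd))
  exact hk.integral_prod_right'

lemma stronglyMeasurable_conv (hψ : Measurable ψ) (hg : StronglyMeasurable g) :
    StronglyMeasurable (conv ψ g) :=
  (stronglyMeasurable_uncurry_conv (K := fun _ => ψ) (hψ.comp measurable_snd)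
    hg).of_uncurry_left (x := 0)

lemma BoundedMeasurable.conv (hg : BoundedMeasurable g) (hm : Measurable ψ)
    (hψ : Integrable ψ) : BoundedMeasurable (conv ψ g) := by
  obtain ⟨C, hC⟩ := hg.exists_norm_le
  refine ⟨stronglyMeasurable_conv hm hg.stronglyMeasurable, ∫ u, ‖ψ u‖ * C, fun h => ?_⟩
  refine norm_integral_le_of_norm_le (hψ.norm.mul_const C) (.of_forall fun u => ?_)
  rw [norm_smul]
  exact mul_le_mul_of_nonneg_left (hC _) (norm_nonneg _)

lemma conv_conv [CompleteSpace X] {φ : ℝ → ℝ} (hψ : Integrable ψ) (hφ : Integrable φ)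
    (hg : BoundedMeasurable g) (h : HR) :
    conv (ψ ⋆ φ) g h = conv ψ (conv φ g) h := by
  have hline : BoundedMeasurable fun z => g (h.1, h.2.1, z) := hg.comp_measurable (by fun_prop)
  have hsub : BoundedMeasurable fun x : ℝ × ℝ => g (h.1, h.2.1, h.2.2 - x.1) :=
    hg.comp_measurable (by fun_prop)
  change ((ψ ⋆ φ) ⋆ fun z => g (h.1, h.2.1, z)) h.2.2 =
    (ψ ⋆ φ ⋆ fun z => g (h.1, h.2.1, z)) h.2.2
  refine convolution_assoc' (.lsmul ℝ ℝ) (.lsmul ℝ ℝ) (.lsmul ℝ ℝ)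
    (.lsmul ℝ ℝ : ℝ →L[ℝ] X →L[ℝ] X) (fun x y z => ?_)
    (hψ.ae_convolution_exists _ hφ) (.of_forall fun z => ?_) ?_
  · exact smul_assoc x y z
  · exact (hline.comp_measurable (by fun_prop)).integrable_smul hφ
  · refine (hsub.integrable_smul
      (hψ.convolution_integrand (ContinuousLinearMap.lsmul ℝ ℝ) hφ)).congr (.of_forall fun x => ?_)
    exact smul_assoc (ψ x.2) (φ (x.1 - x.2)) (g (h.1, h.2.1, h.2.2 - x.1))

lemma eLpNorm_conv_le (hψ : Measurable ψ) (hg : StronglyMeasurable g) (hp : 1 ≤ p) :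
    eLpNorm (conv ψ g) p ≤ (∫⁻ u, ‖ψ u‖ₑ) * eLpNorm g p := by
  rw [conv_eq_integral_vmul]
  refine (eLpNorm_integral_smul_le hψ (stronglyMeasurable_uncurry_comp_vmul_neg hg) hp).trans_eq ?_
  simp_rw [eLpNorm_comp_vmul hg]
  exact lintegral_mul_const _ hψ.enorm

lemma eLpNorm_conv_sub_le [CompleteSpace X] (hm : Measurable ψ) (hψ : Integrable ψ)
    (hψ1 : ∫ u, ψ u = 1) (hg : BoundedMeasurable g) (hp : 1 ≤ p) :
    eLpNorm (fun h => conv ψ g h - g h) p ≤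
      ∫⁻ u, ‖ψ u‖ₑ * eLpNorm (fun h => g (vmul (-u) h) - g h) p := by
  have hdiff : (fun h => conv ψ g h - g h) =
      fun h => ∫ u, ψ u • (g (vmul (-u) h) - g h) := by
    ext h
    simp only [smul_sub]
    rw [integral_sub (hg.integrable_smul_comp_vmul hψ h) (hψ.smul_const _), integral_smul_const,
      hψ1, one_smul, conv_eq_integral_vmul]
  rw [hdiff]
  exact eLpNorm_integral_smul_le hm ((stronglyMeasurable_uncurry_comp_vmul_neg
    hg.stronglyMeasurable).sub (hg.stronglyMeasurable.comp_measurable measurable_snd)) hp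

lemma lintegral_enorm_Pker_add_sub_le {s t : ℝ} (hs : 0 < s) (ht : 0 ≤ t) :
    ∫⁻ u, ‖Pker s (u + t) - Pker s u‖ₑ ≤ ENNReal.ofReal (t / s) := by
  have hm : Measurable fun u => ‖Pker s u‖ₑ := (continuous_Pker hs).measurable.enorm
  calc ∫⁻ u, ‖Pker s (u + t) - Pker s u‖ₑ
      ≤ ∫⁻ u, ENNReal.ofReal (t / (2 * s)) * (‖Pker s (u + t)‖ₑ + ‖Pker s u‖ₑ) := by
        refine lintegral_mono fun u => ?_
        rw [Real.enorm_eq_ofReal_abs, Real.enorm_of_nonneg (Pker_pos hs _).le,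
          Real.enorm_of_nonneg (Pker_pos hs _).le,
          ← ENNReal.ofReal_add (Pker_pos hs _).le (Pker_pos hs _).le,
          ← ENNReal.ofReal_mul (by positivity)]
        exact ENNReal.ofReal_le_ofReal (abs_Pker_add_sub_le hs ht u)
    _ = ENNReal.ofReal (t / s) := by
        rw [lintegral_const_mul' _ _ ENNReal.ofReal_ne_top, lintegral_add_right _ hm,
          lintegral_add_right_eq_self (fun u => ‖Pker s u‖ₑ) t, lintegral_enorm_Pker hs,
          one_add_one_eq_two, ← ENNReal.ofReal_ofNat, ← ENNReal.ofReal_mul (by positivity)]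
        congr 1
        field_simp

lemma eLpNorm_conv_Pker_vmul_sub_le {s t : ℝ} (hs : 0 < s) (ht : 0 ≤ t)
    (hg : BoundedMeasurable g) (hp : 1 ≤ p) :
    eLpNorm (fun h => conv (Pker s) g (vmul t h) - conv (Pker s) g h) p ≤
      ENNReal.ofReal (t / s) * eLpNorm g p := by
  have hm := (continuous_Pker hs).measurable
  have hdiff : (fun h => conv (Pker s) g (vmul t h) - conv (Pker s) g h) =
      conv (fun u => Pker s (u + t) - Pker s u) g := by
    ext h
    rw [conv_vmul, conv_sub_left ((integrable_Pker hs).comp_add_right t) (integrable_Pker hs) hg]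
  rw [hdiff]
  refine (eLpNorm_conv_le ((hm.comp (measurable_add_const t)).sub hm)
    hg.stronglyMeasurable hp).trans ?_
  gcongr
  exact lintegral_enorm_Pker_add_sub_le hs ht

end CentralConvolution

section HorizontalTranslations

open scoped ENNReal

/-- Right translation by `(r, 0, 0)`: the flow of the horizontal field `∂_a`. -/
def amul (r : ℝ) (h : HR) : HR := (h.1 + r, h.2.1, h.2.2)

/-- Right translation by `(0, r, 0)`: the flow of the horizontal field `∂_b`. -/
def bmul (r : ℝ) (h : HR) : HR := (h.1, h.2.1 + r, h.2.2 + h.1 * r)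

lemma vmul_mul_eq_commutator (α β : ℝ) (h : HR) :
    vmul (α * β) h = bmul (-β) (amul (-α) (bmul β (amul α h))) := by
  simp only [vmul, bmul, amul, Prod.mk.injEq]
  exact ⟨by ring, by ring, by ring⟩

lemma amul_vmul (r u : ℝ) (h : HR) : amul r (vmul u h) = vmul u (amul r h) := rfl

lemma bmul_vmul (r u : ℝ) (h : HR) : bmul r (vmul u h) = vmul u (bmul r h) := by
  simp only [bmul, vmul, add_right_comm]

lemma measurable_uncurry_amul : Measurable (Function.uncurry amul) := by
  unfold amul Function.uncurry; fun_prop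

lemma measurable_uncurry_bmul : Measurable (Function.uncurry bmul) := by
  unfold bmul Function.uncurry; fun_prop

lemma measurePreserving_amul (r : ℝ) : MeasurePreserving (amul r) := by
  convert measurePreserving_add_right_prod (r, 0, 0) using 2 with h
  ext <;> simp [amul]

lemma measurePreserving_bmul (r : ℝ) : MeasurePreserving (bmul r) :=
  (MeasurePreserving.id volume).skew_product
    (g := fun (x : ℝ) (w : ℝ × ℝ) => (w.1 + r, w.2 + x * r)) (by fun_prop) (.of_forall fun x =>
      (measurePreserving_add_right (volume : Measure (ℝ × ℝ)) (r, x * r)).map_eq)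

variable {X : Type*} [NormedAddCommGroup X] {g A B : HR → X} {p : ℝ≥0∞}

lemma eLpNorm_comp_comp_sub_le {α : Type*} [MeasurableSpace α] {μ : Measure α} {g : α → X}
    (hg : StronglyMeasurable g) {S T : α → α} (hS : MeasurePreserving S μ μ)
    (hT : MeasurePreserving T μ μ) (hp : 1 ≤ p) :
    eLpNorm (fun x => g (T (S x)) - g x) p μ ≤
      eLpNorm (fun x => g (T x) - g x) p μ + eLpNorm (fun x => g (S x) - g x) p μ := by
  have hgS : StronglyMeasurable fun x => g (S x) - g x :=
    (hg.comp_measurable hS.measurable).sub hg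
  have hgT : StronglyMeasurable fun x => g (T x) - g x :=
    (hg.comp_measurable hT.measurable).sub hg
  calc eLpNorm (fun x => g (T (S x)) - g x) p μ
      = eLpNorm (((fun x => g (T x) - g x) ∘ S) + fun x => g (S x) - g x) p μ := by
        congr 1 with x
        simp
    _ ≤ eLpNorm ((fun x => g (T x) - g x) ∘ S) p μ + eLpNorm (fun x => g (S x) - g x) p μ :=
        eLpNorm_add_le (hgT.comp_measurable hS.measurable).aestronglyMeasurable
          hgS.aestronglyMeasurable hp
    _ = eLpNorm (fun x => g (T x) - g x) p μ + eLpNorm (fun x => g (S x) - g x) p μ := by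
        rw [eLpNorm_comp_measurePreserving hgT.aestronglyMeasurable hS]

variable [NormedSpace ℝ X]

/-- `A` is the derivative of `g` along the flow `T`, in integrated form; unlike a pointwise
derivative, this passes through convolutions by Fubini's theorem alone. -/
def HasDerivAlong {α : Type*} (T : ℝ → α → α) (g A : α → X) : Prop :=
  ∀ r x, g (T r x) - g x = ∫ ρ in (0 : ℝ)..r, A (T ρ x)

lemma HasDerivAlong.eLpNorm_comp_sub_le {α : Type*} [MeasurableSpace α] {μ : Measure α}
    [SFinite μ] {T : ℝ → α → α} {g A : α → X} (H : HasDerivAlong T g A)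
    (hA : StronglyMeasurable A) (hT : Measurable (Function.uncurry T))
    (hTμ : ∀ r, MeasurePreserving (T r) μ μ) (hp : 1 ≤ p) (r : ℝ) :
    eLpNorm (fun x => g (T r x) - g x) p μ ≤ ENNReal.ofReal |r| * eLpNorm A p μ :=
  calc eLpNorm (fun x => g (T r x) - g x) p μ
      = eLpNorm (fun x => ∫ ρ in Set.uIoc 0 r, A (T ρ x)) p μ := by
        refine eLpNorm_congr_norm_ae (.of_forall fun x => ?_)
        rw [H, intervalIntegral.norm_intervalIntegral_eq]
    _ ≤ ∫⁻ ρ in Set.uIoc 0 r, eLpNorm (fun x => A (T ρ x)) p μ :=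
        eLpNorm_integral_le (hA.comp_measurable hT) hp
    _ = ∫⁻ _ in Set.uIoc 0 r, eLpNorm A p μ := by
        congr 1 with ρ
        exact eLpNorm_comp_measurePreserving hA.aestronglyMeasurable (hTμ ρ)
    _ = ENNReal.ofReal |r| * eLpNorm A p μ := by
        rw [setLIntegral_const, Real.volume_uIoc, sub_zero, mul_comm]

lemma HasDerivAlong.conv {T : ℝ → HR → HR} (H : HasDerivAlong T g A)
    (hg : BoundedMeasurable g) (hA : BoundedMeasurable A) (hT : Measurable (Function.uncurry T))
    (hcomm : ∀ r u h, T r (vmul u h) = vmul u (T r h)) {ψ : ℝ → ℝ} (hψ : Integrable ψ) :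
    HasDerivAlong T (conv ψ g) (conv ψ A) := fun r h => by
  have hint : Integrable (fun x : ℝ × ℝ => ψ x.2 • A (T x.1 (vmul (-x.2) h)))
      ((volume.restrict (Set.uIoc 0 r)).prod volume) := by
    have : IsFiniteMeasure (volume.restrict (Set.uIoc 0 r)) := ⟨by simp [Set.uIoc]⟩
    exact (hA.comp_measurable (hT.comp (measurable_fst.prodMk (measurable_uncurry_vmul.comp
      (measurable_snd.neg.prodMk measurable_const))))).integrable_smul (hψ.comp_snd _)
  calc HR.conv ψ g (T r h) - HR.conv ψ g h
      = ∫ u, ψ u • (g (T r (vmul (-u) h)) - g (vmul (-u) h)) := by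
        simp only [conv_eq_integral_vmul, smul_sub, hcomm]
        exact (integral_sub (hg.integrable_smul_comp_vmul hψ _)
          (hg.integrable_smul_comp_vmul hψ h)).symm
    _ = ∫ u, ∫ ρ in (0 : ℝ)..r, ψ u • A (T ρ (vmul (-u) h)) := by
        simp only [H r, intervalIntegral.integral_smul]
    _ = ∫ ρ in (0 : ℝ)..r, HR.conv ψ A (T ρ h) := by
        rw [← intervalIntegral_integral_swap hint]
        simp only [conv_eq_integral_vmul, hcomm]

/-- `(A, B)` is the horizontal gradient `∇_ℍ g`, in integrated form, so that it makes sense for the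
convolutions of a smooth function with `P_t` and `Q_t` without differentiating them. -/
structure HasHorizontalGradient (g A B : HR → X) : Prop where
  along_amul : HasDerivAlong amul g A
  along_bmul : HasDerivAlong bmul g B

lemma HasHorizontalGradient.conv (H : HasHorizontalGradient g A B) (hg : BoundedMeasurable g)
    (hA : BoundedMeasurable A) (hB : BoundedMeasurable B) {ψ : ℝ → ℝ} (hψ : Integrable ψ) :
    HasHorizontalGradient (conv ψ g) (conv ψ A) (conv ψ B) :=
  ⟨H.along_amul.conv hg hA measurable_uncurry_amul amul_vmul hψ,
    H.along_bmul.conv hg hB measurable_uncurry_bmul bmul_vmul hψ⟩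

lemma HasHorizontalGradient.eLpNorm_vmul_mul_sub_le (H : HasHorizontalGradient g A B)
    (hg : StronglyMeasurable g) (hA : StronglyMeasurable A) (hB : StronglyMeasurable B)
    (hp : 1 ≤ p) (α β : ℝ) :
    eLpNorm (fun h => g (vmul (α * β) h) - g h) p ≤
      2 * (ENNReal.ofReal |α| * eLpNorm A p + ENNReal.ofReal |β| * eLpNorm B p) := by
  have hbα := measurePreserving_amul α
  have hbβ := measurePreserving_bmul β
  have hA' (r : ℝ) := H.along_amul.eLpNorm_comp_sub_le hA measurable_uncurry_amul
    measurePreserving_amul hp r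
  have hB' (r : ℝ) := H.along_bmul.eLpNorm_comp_sub_le hB measurable_uncurry_bmul
    measurePreserving_bmul hp r
  calc eLpNorm (fun h => g (vmul (α * β) h) - g h) p volume
      = eLpNorm (fun h => g (bmul (-β) (amul (-α) (bmul β (amul α h)))) - g h) p volume := by
        simp only [vmul_mul_eq_commutator]
    _ ≤ ENNReal.ofReal |-β| * eLpNorm B p + (ENNReal.ofReal |-α| * eLpNorm A p +
          (ENNReal.ofReal |β| * eLpNorm B p + ENNReal.ofReal |α| * eLpNorm A p)) := by
        refine (eLpNorm_comp_comp_sub_le hg ((measurePreserving_amul (-α)).comp (hbβ.comp hbα))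
          (measurePreserving_bmul (-β)) hp).trans (add_le_add (hB' _) ?_)
        refine (eLpNorm_comp_comp_sub_le hg (hbβ.comp hbα)
          (measurePreserving_amul (-α)) hp).trans (add_le_add (hA' _) ?_)
        exact (eLpNorm_comp_comp_sub_le hg hbα hbβ hp).trans (add_le_add (hB' _) (hA' _))
    _ = 2 * (ENNReal.ofReal |α| * eLpNorm A p volume +
          ENNReal.ofReal |β| * eLpNorm B p volume) := by
        rw [abs_neg, abs_neg]
        ring

lemma HasHorizontalGradient.eLpNorm_vmul_sub_le (H : HasHorizontalGradient g A B)
    (hg : StronglyMeasurable g) (hA : StronglyMeasurable A) (hB : StronglyMeasurable B)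
    (hp : 1 ≤ p) (u : ℝ) :
    eLpNorm (fun h => g (vmul u h) - g h) p ≤
      ENNReal.ofReal (|u| ^ (1 / 2 : ℝ)) * (2 * (eLpNorm A p + eLpNorm B p)) := by
  obtain ⟨α, β, hαβ, hα, hβ⟩ : ∃ α β : ℝ, α * β = u ∧ |α| = √|u| ∧ |β| = √|u| := by
    rcases le_total 0 u with h | h
    · exact ⟨√|u|, √|u|, by rw [Real.mul_self_sqrt (abs_nonneg u), abs_of_nonneg h],
        abs_of_nonneg (Real.sqrt_nonneg _), abs_of_nonneg (Real.sqrt_nonneg _)⟩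
    · exact ⟨√|u|, -√|u|, by rw [mul_neg, Real.mul_self_sqrt (abs_nonneg u), abs_of_nonpos h,
        neg_neg], abs_of_nonneg (Real.sqrt_nonneg _),
        by rw [abs_neg, abs_of_nonneg (Real.sqrt_nonneg _)]⟩
  refine (hαβ ▸ H.eLpNorm_vmul_mul_sub_le hg hA hB hp α β).trans_eq ?_
  rw [hα, hβ, Real.sqrt_eq_rpow]
  ring

lemma HasHorizontalGradient.eLpNorm_conv_Pker_sub_le [CompleteSpace X]
    (H : HasHorizontalGradient g A B) (hg : BoundedMeasurable g) (hA : StronglyMeasurable A)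
    (hB : StronglyMeasurable B) (hp : 1 ≤ p) {s : ℝ} (hs : 0 < s) :
    eLpNorm (fun h => HR.conv (Pker s) g h - g h) p ≤
      ENNReal.ofReal (s ^ (1 / 2 : ℝ)) * poissonMoment (1 / 2) *
        (2 * (eLpNorm A p + eLpNorm B p)) := by
  have hm := (continuous_Pker hs).measurable
  have hmoment : Measurable fun u => ‖Pker s u‖ₑ * ENNReal.ofReal (|u| ^ (1 / 2 : ℝ)) :=
    hm.enorm.mul (by fun_prop)
  refine (eLpNorm_conv_sub_le hm (integrable_Pker hs) (integral_Pker hs) hg hp).trans ?_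
  rw [← lintegral_Pker_mul_rpow hs, ← lintegral_mul_const _ hmoment]
  refine lintegral_mono fun u => ?_
  rw [mul_assoc]
  gcongr
  simpa only [abs_neg] using H.eLpNorm_vmul_sub_le hg.stronglyMeasurable hA hB hp (-u)

lemma continuous_da {f : HR → X} (hf : ContDiff ℝ 1 f) : Continuous (da f) :=
  (hf.continuous_fderiv one_ne_zero).clm_apply continuous_const

lemma continuous_db {f : HR → X} (hf : ContDiff ℝ 1 f) : Continuous (db f) :=
  ((hf.continuous_fderiv one_ne_zero).clm_apply continuous_const).add
    (continuous_fst.smul ((hf.continuous_fderiv one_ne_zero).clm_apply continuous_const))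

lemma hasDerivAt_comp_amul {f : HR → X} (hf : Differentiable ℝ f) (h : HR) (r : ℝ) :
    HasDerivAt (fun r => f (amul r h)) (da f (amul r h)) r :=
  (hf (amul r h)).hasFDerivAt.comp_hasDerivAt r
    (((hasDerivAt_id r).const_add h.1).prodMk (hasDerivAt_const r h.2))

lemma hasDerivAt_comp_bmul {f : HR → X} (hf : Differentiable ℝ f) (h : HR) (r : ℝ) :
    HasDerivAt (fun r => f (bmul r h)) (db f (bmul r h)) r := by
  have hcurve : HasDerivAt (fun r => bmul r h) ((0, 1, 0) + h.1 • (0, 0, 1) : HR) r := by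
    simpa [bmul] using (hasDerivAt_const r h.1).prodMk (((hasDerivAt_id r).const_add h.2.1).prodMk
      (((hasDerivAt_id r).const_mul h.1).const_add h.2.2))
  simpa only [map_add, map_smul] using! (hf (bmul r h)).hasFDerivAt.comp_hasDerivAt r hcurve

lemma hasHorizontalGradient_of_contDiff [CompleteSpace X] {f : HR → X} (hf : ContDiff ℝ 1 f) :
    HasHorizontalGradient f (da f) (db f) := by
  have hdiff := hf.differentiable one_ne_zero
  refine ⟨fun r h => ?_, fun r h => ?_⟩
  · have hcont : Continuous fun ρ => amul ρ h := by unfold amul; fun_prop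
    rw [intervalIntegral.integral_eq_sub_of_hasDerivAt
      (fun ρ _ => hasDerivAt_comp_amul hdiff h ρ)
      (((continuous_da hf).comp hcont).intervalIntegrable _ _)]
    simp [amul]
  · have hcont : Continuous fun ρ => bmul ρ h := by unfold bmul; fun_prop
    rw [intervalIntegral.integral_eq_sub_of_hasDerivAt
      (fun ρ _ => hasDerivAt_comp_bmul hdiff h ρ)
      (((continuous_db hf).comp hcont).intervalIntegrable _ _)]
    simp [bmul]

end HorizontalTranslations

section Scales

open Filter Topology
open scoped ENNReal

lemma le_tsum_of_le_double_add {a G : ℝ → ℝ≥0∞}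
    (h : ∀ t, 0 < t → a t ≤ a (2 * t) + G t) (ha : Tendsto a atTop (𝓝 0)) {t : ℝ} (ht : 0 < t) :
    a t ≤ ∑' k : ℕ, G (2 ^ k * t) := by
  have hpartial (n : ℕ) : a t ≤ a (2 ^ n * t) + ∑ k ∈ Finset.range n, G (2 ^ k * t) := by
    induction n with
    | zero => simp
    | succ n ih =>
      refine ih.trans ?_
      rw [Finset.sum_range_succ, add_comm (∑ k ∈ _, _), ← add_assoc, pow_succ', mul_assoc]
      gcongr
      exact h _ (by positivity)
  have hlim : Tendsto (fun n : ℕ => a (2 ^ n * t) + ∑' k : ℕ, G (2 ^ k * t)) atTop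
      (𝓝 (∑' k : ℕ, G (2 ^ k * t))) := by
    simpa using (ha.comp ((tendsto_pow_atTop_atTop_of_one_lt one_lt_two).atTop_mul_const
      ht)).add_const (∑' k : ℕ, G (2 ^ k * t))
  exact ge_of_tendsto' hlim fun n =>
    (hpartial n).trans (add_le_add_right (ENNReal.sum_le_tsum _) _)

lemma tendsto_ofReal_div_mul_atTop (t : ℝ) {K : ℝ≥0∞} (hK : K ≠ ⊤) :
    Tendsto (fun s : ℝ => ENNReal.ofReal (t / s) * K) atTop (𝓝 0) := by
  simpa using ENNReal.Tendsto.mul_const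
    (ENNReal.tendsto_ofReal (tendsto_const_nhds.div_atTop tendsto_id)) (.inr hK)

lemma enorm_sub_le_setLIntegral_of_hasDerivAt {E : Type*} [NormedAddCommGroup E]
    [NormedSpace ℝ E] [CompleteSpace E] {φ φ' : ℝ → E} {a b : ℝ} (hab : a ≤ b)
    (hφ : ∀ x ∈ Set.Icc a b, HasDerivAt φ (φ' x) x)
    (hφ' : AEStronglyMeasurable φ' (volume.restrict (Set.Ioc a b))) :
    ‖φ b - φ a‖ₑ ≤ ∫⁻ x in Set.Ioc a b, ‖φ' x‖ₑ := by
  rcases eq_or_ne (∫⁻ x in Set.Ioc a b, ‖φ' x‖ₑ) ⊤ with htop | hfin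
  · simp [htop]
  have hint : IntervalIntegrable φ' volume a b :=
    (intervalIntegrable_iff_integrableOn_Ioc_of_le hab).2 ⟨hφ', hfin.lt_top⟩
  rw [← intervalIntegral.integral_eq_sub_of_hasDerivAt (Set.uIcc_of_le hab ▸ hφ) hint,
    intervalIntegral.integral_of_le hab]
  exact enorm_integral_le_lintegral_enorm _

variable {X : Type*} [NormedAddCommGroup X] [NormedSpace ℝ X] {f A B : HR → X} {p : ℝ≥0∞}

lemma stronglyMeasurable_uncurry_conv_Qker (hf : StronglyMeasurable f) :
    StronglyMeasurable (Function.uncurry fun (s : ℝ) h => conv (Qker s) f h) :=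
  stronglyMeasurable_uncurry_conv measurable_uncurry_Qker hf

lemma measurable_eLpNorm_conv_Qker (hf : StronglyMeasurable f) :
    Measurable fun s => eLpNorm (conv (Qker s) f) p volume := by
  simp_rw [← eLpNorm_enorm (conv _ f)]
  exact measurable_eLpNorm_prod_right (stronglyMeasurable_uncurry_conv_Qker hf).enorm p

lemma eLpNorm_conv_Qker_le {s : ℝ} (hs : 0 < s) (hf : StronglyMeasurable f) (hp : 1 ≤ p) :
    eLpNorm (conv (Qker s) f) p ≤ ENNReal.ofReal (1 / s) * eLpNorm f p := by
  refine (eLpNorm_conv_le measurable_uncurry_Qker.of_uncurry_left hf hp).trans ?_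
  rw [one_div]
  gcongr
  exact lintegral_enorm_Qker_le hs

lemma hasDerivAt_conv_Pker (hf : BoundedMeasurable f) {s : ℝ} (hs : 0 < s) (h : HR) :
    HasDerivAt (fun s => conv (Pker s) f h) (conv (Qker s) f h) s := by
  have hline : BoundedMeasurable fun u => f (h.1, h.2.1, h.2.2 - u) :=
    hf.comp_measurable (by fun_prop)
  obtain ⟨C, hC⟩ := hline.exists_norm_le
  exact hasDerivAt_integral_Pker_smul hline.stronglyMeasurable.aestronglyMeasurable hC hs

lemma conv_Pker_eq_integral_scaled {s : ℝ} (hs : 0 < s) (f : HR → X) (h : HR) :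
    conv (Pker s) f h = ∫ u, Pker 1 u • f (vmul (-(s * u)) h) := by
  have hscale := Measure.integral_comp_mul_left (fun u => Pker s u • f (vmul (-u) h)) s
  simp only [Pker_mul_left hs, mul_smul, integral_smul, abs_of_pos (inv_pos.2 hs)] at hscale
  rw [conv_eq_integral_vmul]
  exact (smul_right_injective X (inv_pos.2 hs).ne' hscale).symm

lemma tendsto_conv_Pker [CompleteSpace X] (hf : Continuous f) {C : ℝ} (hC : ∀ h, ‖f h‖ ≤ C)
    (h : HR) : Tendsto (fun s => conv (Pker s) f h) (𝓝[>] 0) (𝓝 (f h)) := by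
  have hlim : Tendsto (fun s => ∫ u, Pker 1 u • f (vmul (-(s * u)) h)) (𝓝[>] 0)
      (𝓝 (∫ u, Pker 1 u • f h)) := by
    have hcont : Continuous fun x : ℝ × ℝ => f (vmul (-(x.1 * x.2)) h) :=
      hf.comp (by unfold vmul; fun_prop)
    refine tendsto_integral_filter_of_dominated_convergence (fun u => ‖Pker 1 u‖ * C)
      (.of_forall fun s => ?_) (.of_forall fun s => .of_forall fun u => ?_)
      ((integrable_Pker one_pos).norm.mul_const C) (.of_forall fun u => ?_)
    · exact ((continuous_Pker one_pos).smul (hcont.comp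
        (continuous_const.prodMk continuous_id))).aestronglyMeasurable
    · rw [norm_smul]
      exact mul_le_mul_of_nonneg_left (hC _) (norm_nonneg _)
    · have htend := (hcont.comp (continuous_id.prodMk (continuous_const (y := u)))).tendsto 0
      simpa [vmul] using (htend.mono_left nhdsWithin_le_nhds).const_smul (Pker 1 u)
  rw [integral_smul_const, integral_Pker one_pos, one_smul] at hlim
  refine hlim.congr' ?_
  filter_upwards [self_mem_nhdsWithin] with s hs
  exact (conv_Pker_eq_integral_scaled hs f h).symm

lemma enorm_conv_Pker_sub_le [CompleteSpace X] (hf : Continuous f) {C : ℝ}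
    (hC : ∀ h, ‖f h‖ ≤ C) {t : ℝ} (ht : 0 < t) (h : HR) :
    ‖conv (Pker t) f h - f h‖ₑ ≤ ∫⁻ s in Set.Ioc 0 t, ‖conv (Qker s) f h‖ₑ := by
  have hlim := (((tendsto_conv_Pker hf hC h).const_sub (conv (Pker t) f h))).enorm
  have hfm : BoundedMeasurable f := ⟨hf.stronglyMeasurable, C, hC⟩
  refine le_of_tendsto hlim ?_
  filter_upwards [Ioc_mem_nhdsGT ht] with ε hε
  refine (enorm_sub_le_setLIntegral_of_hasDerivAt hε.2
    (fun s hs => hasDerivAt_conv_Pker hfm (hε.1.trans_le hs.1) h) ?_).trans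
    (lintegral_mono_set (Set.Ioc_subset_Ioc_left hε.1.le))
  exact ((stronglyMeasurable_uncurry_conv_Qker hfm.stronglyMeasurable).comp_measurable
    measurable_prodMk_right).aestronglyMeasurable

lemma eLpNorm_conv_Pker_sub_le_setLIntegral [CompleteSpace X] (hf : Continuous f) {C : ℝ}
    (hC : ∀ h, ‖f h‖ ≤ C) (hp : 1 ≤ p) {t : ℝ} (ht : 0 < t) :
    eLpNorm (fun h => conv (Pker t) f h - f h) p ≤
      ∫⁻ s in Set.Ioc 0 t, eLpNorm (conv (Qker s) f) p := by
  refine (eLpNorm_mono_enorm fun h => (enorm_conv_Pker_sub_le hf hC ht h).trans_eq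
    (enorm_eq_self _).symm).trans ?_
  exact (eLpNorm_lintegral_le
    (stronglyMeasurable_uncurry_conv_Qker hf.stronglyMeasurable).enorm hp).trans_eq
    (lintegral_congr fun s => eLpNorm_enorm _)

lemma HasHorizontalGradient.eLpNorm_conv_Qker_le_double_add [CompleteSpace X]
    (H : HasHorizontalGradient f A B) (hf : BoundedMeasurable f) (hA : BoundedMeasurable A)
    (hB : BoundedMeasurable B) (hp : 1 ≤ p) {s : ℝ} (hs : 0 < s) :
    eLpNorm (HR.conv (Qker s) f) p ≤ eLpNorm (HR.conv (Qker (2 * s)) f) p +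
      ENNReal.ofReal (s ^ (1 / 2 : ℝ)) * poissonMoment (1 / 2) *
        (2 * (eLpNorm (HR.conv (Qker s) A) p + eLpNorm (HR.conv (Qker s) B) p)) := by
  have hm : Measurable (Qker s) := measurable_uncurry_Qker.of_uncurry_left
  have hQ := integrable_Qker hs
  have hdouble : HR.conv (Qker (2 * s)) f = HR.conv (Pker s) (HR.conv (Qker s) f) := by
    ext h
    rw [two_mul, ← Pker_convolution_Qker hs hs, conv_conv (integrable_Pker hs) hQ hf]
  have hQf := hf.conv hm hQ
  have hPQf := hQf.conv (continuous_Pker hs).measurable (integrable_Pker hs)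
  have hsplit : HR.conv (Qker s) f = HR.conv (Qker (2 * s)) f -
      fun h => HR.conv (Pker s) (HR.conv (Qker s) f) h - HR.conv (Qker s) f h := by
    ext h
    simp [hdouble]
  rw [hsplit]
  refine (eLpNorm_sub_le ?_ ?_ hp).trans (add_le_add_right ?_ _)
  · exact hdouble ▸ hPQf.stronglyMeasurable.aestronglyMeasurable
  · exact (hPQf.sub hQf).stronglyMeasurable.aestronglyMeasurable
  · exact (H.conv hf hA hB hQ).eLpNorm_conv_Pker_sub_le hQf
      (hA.conv hm hQ).stronglyMeasurable (hB.conv hm hQ).stronglyMeasurable hp hs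

lemma HasHorizontalGradient.eLpNorm_conv_Qker_le_tsum [CompleteSpace X]
    (H : HasHorizontalGradient f A B) (hf : BoundedMeasurable f) (hA : BoundedMeasurable A)
    (hB : BoundedMeasurable B) (hp : 1 ≤ p) (hfp : eLpNorm f p ≠ ⊤) {s : ℝ} (hs : 0 < s) :
    eLpNorm (HR.conv (Qker s) f) p ≤ ∑' k : ℕ,
      ENNReal.ofReal ((2 ^ k * s) ^ (1 / 2 : ℝ)) * poissonMoment (1 / 2) *
        (2 * (eLpNorm (HR.conv (Qker (2 ^ k * s)) A) p +
          eLpNorm (HR.conv (Qker (2 ^ k * s)) B) p)) := by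
  refine le_tsum_of_le_double_add (a := fun s => eLpNorm (HR.conv (Qker s) f) p volume)
    (G := fun s => ENNReal.ofReal (s ^ (1 / 2 : ℝ)) * poissonMoment (1 / 2) *
      (2 * (eLpNorm (HR.conv (Qker s) A) p volume + eLpNorm (HR.conv (Qker s) B) p volume)))
    (fun s hs => H.eLpNorm_conv_Qker_le_double_add hf hA hB hp hs) ?_ hs
  refine tendsto_of_tendsto_of_tendsto_of_le_of_le' tendsto_const_nhds
    (tendsto_ofReal_div_mul_atTop 1 hfp) (.of_forall fun s => zero_le) ?_
  filter_upwards [eventually_gt_atTop 0] with s hs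
  exact eLpNorm_conv_Qker_le hs hf.stronglyMeasurable hp

lemma eLpNorm_conv_Pker_vmul_sub_le_double_add [CompleteSpace X] (hf : BoundedMeasurable f)
    (hp : 1 ≤ p) {s t : ℝ} (hs : 0 < s) (ht : 0 ≤ t) :
    eLpNorm (fun h => conv (Pker s) f (vmul t h) - conv (Pker s) f h) p ≤
      eLpNorm (fun h => conv (Pker (2 * s)) f (vmul t h) - conv (Pker (2 * s)) f h) p +
        ENNReal.ofReal (t / s) * eLpNorm (fun h => conv (Pker s) f h - f h) p := by
  have hP := integrable_Pker hs
  have hPm := (continuous_Pker hs).measurable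
  have hPf := hf.conv hPm hP
  set g : HR → X := fun h => conv (Pker s) f h - f h
  have hg : BoundedMeasurable g := hPf.sub hf
  have hPg (h : HR) : conv (Pker s) g h = conv (Pker (2 * s)) f h - conv (Pker s) f h := by
    rw [conv_sub_right hP hPf hf, two_mul, ← Pker_convolution_Pker hs hs, conv_conv hP hP hf]
  have hdiff {k : HR → X} (hk : BoundedMeasurable k) :
      AEStronglyMeasurable fun h => k (vmul t h) - k h :=
    ((hk.comp_measurable (measurable_vmul t)).sub hk).stronglyMeasurable.aestronglyMeasurable
  have h2s : 0 < 2 * s := by positivity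
  have hsplit : (fun h => conv (Pker s) f (vmul t h) - conv (Pker s) f h) =
      (fun h => conv (Pker (2 * s)) f (vmul t h) - conv (Pker (2 * s)) f h) -
        fun h => conv (Pker s) g (vmul t h) - conv (Pker s) g h := by
    ext h
    simp only [Pi.sub_apply, hPg]
    abel
  rw [hsplit]
  exact (eLpNorm_sub_le (hdiff (hf.conv (continuous_Pker h2s).measurable (integrable_Pker h2s)))
    (hdiff (hg.conv hPm hP)) hp).trans
    (add_le_add_right (eLpNorm_conv_Pker_vmul_sub_le hs ht hg hp) _)

lemma eLpNorm_conv_Pker_vmul_sub_le_tsum [CompleteSpace X] (hf : BoundedMeasurable f)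
    (hp : 1 ≤ p) (hfp : eLpNorm f p ≠ ⊤) {s t : ℝ} (hs : 0 < s) (ht : 0 ≤ t) :
    eLpNorm (fun h => conv (Pker s) f (vmul t h) - conv (Pker s) f h) p ≤
      ∑' k : ℕ, ENNReal.ofReal (t / (2 ^ k * s)) *
        eLpNorm (fun h => conv (Pker (2 ^ k * s)) f h - f h) p := by
  refine le_tsum_of_le_double_add
    (a := fun s => eLpNorm (fun h => conv (Pker s) f (vmul t h) - conv (Pker s) f h) p volume)
    (G := fun s => ENNReal.ofReal (t / s) * eLpNorm (fun h => conv (Pker s) f h - f h) p volume)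
    (fun s hs => eLpNorm_conv_Pker_vmul_sub_le_double_add hf hp hs ht) ?_ hs
  refine tendsto_of_tendsto_of_tendsto_of_le_of_le' tendsto_const_nhds
    (tendsto_ofReal_div_mul_atTop t hfp) (.of_forall fun s => zero_le) ?_
  filter_upwards [eventually_gt_atTop 0] with s hs
  exact eLpNorm_conv_Pker_vmul_sub_le hs ht hf hp

lemma eLpNorm_vmul_sub_le_two_mul_add (hf : BoundedMeasurable f) (hp : 1 ≤ p) {s : ℝ}
    (hs : 0 < s) (t : ℝ) :
    eLpNorm (fun h => f (vmul t h) - f h) p ≤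
      2 * eLpNorm (fun h => conv (Pker s) f h - f h) p +
        eLpNorm (fun h => conv (Pker s) f (vmul t h) - conv (Pker s) f h) p := by
  have hPf := hf.conv (continuous_Pker hs).measurable (integrable_Pker hs)
  set e : HR → X := fun h => conv (Pker s) f h - f h
  have he : StronglyMeasurable e := (hPf.sub hf).stronglyMeasurable
  have het : StronglyMeasurable fun h => e (vmul t h) := he.comp_measurable (measurable_vmul t)
  have hsplit : (fun h => f (vmul t h) - f h) = (e - fun h => e (vmul t h)) +
      fun h => conv (Pker s) f (vmul t h) - conv (Pker s) f h := by
    ext h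
    simp only [Pi.add_apply, Pi.sub_apply, e]
    abel
  rw [hsplit, two_mul]
  refine (eLpNorm_add_le (he.sub het).aestronglyMeasurable
    ((hPf.comp_measurable (measurable_vmul t)).sub hPf).stronglyMeasurable.aestronglyMeasurable
    hp).trans (add_le_add_left ?_ _)
  refine (eLpNorm_sub_le he.aestronglyMeasurable het.aestronglyMeasurable hp).trans_eq ?_
  rw [eLpNorm_comp_vmul he]

lemma ofReal_inv_mul_eLpNorm_vmul_sub_le_tsum [CompleteSpace X] (hf : BoundedMeasurable f)
    (hp : 1 ≤ p) (hfp : eLpNorm f p ≠ ⊤) {t : ℝ} (ht : 0 < t) :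
    ENNReal.ofReal t⁻¹ * eLpNorm (fun h => f (vmul t h) - f h) p ≤
      3 * ∑' k : ℕ, ENNReal.ofReal (2 ^ k * t)⁻¹ *
        eLpNorm (fun h => conv (Pker (2 ^ k * t)) f h - f h) p := by
  set e : ℝ → ℝ≥0∞ := fun s => eLpNorm (fun h => conv (Pker s) f h - f h) p
  set S : ℝ≥0∞ := ∑' k : ℕ, ENNReal.ofReal (2 ^ k * t)⁻¹ * e (2 ^ k * t)
  have hzero : ENNReal.ofReal t⁻¹ * e t ≤ S := by
    simpa only [pow_zero, one_mul] using
      ENNReal.le_tsum (f := fun k : ℕ => ENNReal.ofReal (2 ^ k * t)⁻¹ * e (2 ^ k * t)) 0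
  have hsmooth : ENNReal.ofReal t⁻¹ *
      eLpNorm (fun h => conv (Pker t) f (vmul t h) - conv (Pker t) f h) p ≤ S := by
    refine (mul_le_mul_right
      (eLpNorm_conv_Pker_vmul_sub_le_tsum hf hp hfp ht ht.le) _).trans_eq ?_
    rw [← ENNReal.tsum_mul_left]
    refine tsum_congr fun k => ?_
    rw [← mul_assoc, ← ENNReal.ofReal_mul (by positivity), div_eq_mul_inv, ← mul_assoc,
      inv_mul_cancel₀ ht.ne', one_mul]
  calc ENNReal.ofReal t⁻¹ * eLpNorm (fun h => f (vmul t h) - f h) p volume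
      ≤ ENNReal.ofReal t⁻¹ * (2 * e t +
          eLpNorm (fun h => conv (Pker t) f (vmul t h) - conv (Pker t) f h) p volume) := by
        gcongr
        exact eLpNorm_vmul_sub_le_two_mul_add hf hp ht t
    _ ≤ 2 * S + S := by
        rw [mul_add, mul_left_comm]
        gcongr
    _ = 3 * S := by ring

end Scales

section BesovNorm

open scoped ENNReal

/-- The measure `dt/t` on `(0, ∞)`, invariant under dilations. No restriction to the half-line is
needed because `ENNReal.ofReal` truncates the density to `0` at negative `t`. -/
noncomputable def scaleMeasure : Measure ℝ :=
  volume.withDensity fun t => ENNReal.ofReal t⁻¹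

instance : SFinite scaleMeasure :=
  inferInstanceAs (SFinite (volume.withDensity _))

/-- The norm `(∫₀^∞ (t^(-θ) F(t))^q dt/t)^(1/q)` underlying Besov seminorms of smoothness `θ`:
both sides of the theorem are of this form, with `θ = 1/2` on the left and `θ = -1` on the
right. -/
noncomputable def besovNorm (θ : ℝ) (q : ℝ≥0∞) (F : ℝ → ℝ≥0∞) : ℝ≥0∞ :=
  eLpNorm (fun t => ENNReal.ofReal (t ^ (-θ)) * F t) q scaleMeasure

variable {θ : ℝ} {q : ℝ≥0∞} {F G : ℝ → ℝ≥0∞}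

lemma lintegral_scaleMeasure (F : ℝ → ℝ≥0∞) :
    ∫⁻ t, F t ∂scaleMeasure = ∫⁻ t, ENNReal.ofReal t⁻¹ * F t :=
  lintegral_withDensity_eq_lintegral_mul_non_measurable _ (by fun_prop)
    (.of_forall fun _ => ENNReal.ofReal_lt_top) F

lemma ae_scaleMeasure_of_forall_pos {P : ℝ → Prop} (h : ∀ t, 0 < t → P t) :
    ∀ᵐ t ∂scaleMeasure, P t :=
  (ae_withDensity_iff (by fun_prop)).2 <| .of_forall fun t ht => h t (by simpa using ht)

lemma measurePreserving_mul_left_scaleMeasure {a : ℝ} (ha : 0 < a) :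
    MeasurePreserving (a * ·) scaleMeasure scaleMeasure := by
  refine ⟨measurable_const_mul a, Measure.ext_of_lintegral _ fun F hF => ?_⟩
  have hscale (t : ℝ) : ENNReal.ofReal t⁻¹ * F (a * t) =
      ENNReal.ofReal a * (ENNReal.ofReal (a * t)⁻¹ * F (a * t)) := by
    rw [← mul_assoc, ← ENNReal.ofReal_mul ha.le, mul_inv, mul_inv_cancel_left₀ ha.ne']
  have hm : Measurable fun t => ENNReal.ofReal t⁻¹ * F t := by fun_prop
  rw [lintegral_map hF (measurable_const_mul a), lintegral_scaleMeasure, lintegral_scaleMeasure]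
  simp_rw [hscale]
  rw [lintegral_const_mul' _ _ ENNReal.ofReal_ne_top, lintegral_comp_mul_left_of_pos hm ha,
    ← mul_assoc, ← ENNReal.ofReal_mul ha.le, mul_inv_cancel₀ ha.ne', ENNReal.ofReal_one, one_mul]

lemma besovNorm_le_mul {c : ℝ≥0∞} (hc : c ≠ ⊤) (h : ∀ t, 0 < t → F t ≤ c * G t) :
    besovNorm θ q F ≤ c * besovNorm θ q G := by
  lift c to NNReal using hc
  refine eLpNorm_le_mul_eLpNorm_of_ae_le_mul' (ae_scaleMeasure_of_forall_pos fun t ht => ?_) q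
  simp only [enorm_eq_self]
  rw [mul_left_comm]
  gcongr
  exact h t ht

lemma besovNorm_mono (h : ∀ t, 0 < t → F t ≤ G t) : besovNorm θ q F ≤ besovNorm θ q G := by
  simpa using besovNorm_le_mul ENNReal.one_ne_top (by simpa using h)

lemma besovNorm_rpow_mul (θ σ : ℝ) (q : ℝ≥0∞) (F : ℝ → ℝ≥0∞) :
    besovNorm θ q (fun t => ENNReal.ofReal (t ^ σ) * F t) = besovNorm (θ - σ) q F := by
  refine eLpNorm_congr_ae (ae_scaleMeasure_of_forall_pos fun t ht => ?_)
  simp only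
  rw [← mul_assoc, ← ENNReal.ofReal_mul (by positivity), ← Real.rpow_add ht, neg_sub,
    neg_add_eq_sub]

lemma besovNorm_comp_mul_le (hF : Measurable F) {a : ℝ} (ha : 0 < a) :
    besovNorm θ q (fun t => F (a * t)) ≤ ENNReal.ofReal (a ^ θ) * besovNorm θ q F := by
  have hm : Measurable fun t => ENNReal.ofReal (t ^ (-θ)) * F t := by fun_prop
  rw [besovNorm, besovNorm, ← eLpNorm_comp_measurePreserving hm.aestronglyMeasurable
    (measurePreserving_mul_left_scaleMeasure ha)]
  refine eLpNorm_le_mul_eLpNorm_of_ae_le_mul'' q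
    (hm.comp (measurable_const_mul a)).aestronglyMeasurable
    (ae_scaleMeasure_of_forall_pos fun t ht => ?_)
  simp only [enorm_eq_self, Function.comp_apply]
  rw [Real.mul_rpow ha.le ht.le, Real.rpow_neg ha.le, ← mul_assoc,
    ← ENNReal.ofReal_mul (by positivity), mul_inv_cancel_left₀ (by positivity)]

lemma besovNorm_lintegral_comp_mul_le {α : Type*} [MeasurableSpace α] {μ : Measure α}
    [SFinite μ] {ρ : α → ℝ} (hρ : Measurable ρ) (hpos : ∀ᵐ a ∂μ, 0 < ρ a) (hF : Measurable F)
    (hq : 1 ≤ q) :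
    besovNorm θ q (fun t => ∫⁻ a, F (ρ a * t) ∂μ) ≤
      (∫⁻ a, ENNReal.ofReal (ρ a ^ θ) ∂μ) * besovNorm θ q F := by
  have hm : Measurable (Function.uncurry fun a t => ENNReal.ofReal (t ^ (-θ)) * F (ρ a * t)) := by
    unfold Function.uncurry
    fun_prop
  calc besovNorm θ q (fun t => ∫⁻ a, F (ρ a * t) ∂μ)
      = eLpNorm (fun t => ∫⁻ a, ENNReal.ofReal (t ^ (-θ)) * F (ρ a * t) ∂μ) q scaleMeasure := by
        simp only [besovNorm, lintegral_const_mul' _ _ ENNReal.ofReal_ne_top]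
    _ ≤ ∫⁻ a, besovNorm θ q (fun t => F (ρ a * t)) ∂μ := eLpNorm_lintegral_le hm hq
    _ ≤ ∫⁻ a, ENNReal.ofReal (ρ a ^ θ) * besovNorm θ q F ∂μ :=
        lintegral_mono_ae (hpos.mono fun a ha => besovNorm_comp_mul_le hF ha)
    _ = (∫⁻ a, ENNReal.ofReal (ρ a ^ θ) ∂μ) * besovNorm θ q F :=
        lintegral_mul_const _ (by fun_prop)

lemma besovNorm_tsum_two_pow_mul_le (hF : Measurable F) (hq : 1 ≤ q) :
    besovNorm θ q (fun t => ∑' k : ℕ, F (2 ^ k * t)) ≤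
      (1 - ENNReal.ofReal (2 ^ θ))⁻¹ * besovNorm θ q F := by
  have h := besovNorm_lintegral_comp_mul_le (θ := θ) (μ := Measure.count)
    (ρ := fun k : ℕ => (2 : ℝ) ^ k) measurable_from_nat (.of_forall fun k => by positivity) hF hq
  have hgeom (k : ℕ) : ENNReal.ofReal (((2 : ℝ) ^ k) ^ θ) = ENNReal.ofReal (2 ^ θ) ^ k := by
    rw [← ENNReal.ofReal_pow (by positivity), Real.rpow_pow_comm two_pos.le]
  simpa only [lintegral_count, hgeom, ENNReal.tsum_geometric] using h

lemma lintegral_Ioc_zero_one_rpow (hθ : 0 < θ) :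
    ∫⁻ ρ in Set.Ioc (0 : ℝ) 1, ENNReal.ofReal (ρ ^ (θ - 1)) = ENNReal.ofReal θ⁻¹ := by
  have hθ1 : -1 < θ - 1 := by linarith
  rw [← ofReal_integral_eq_lintegral_ofReal
    ((intervalIntegrable_iff_integrableOn_Ioc_of_le zero_le_one).1
      (intervalIntegral.intervalIntegrable_rpow' hθ1))
    (ae_restrict_of_forall_mem measurableSet_Ioc fun ρ hρ => Real.rpow_nonneg hρ.1.le _),
    ← intervalIntegral.integral_of_le zero_le_one, integral_rpow (.inl hθ1)]
  simp [hθ.ne']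

lemma setLIntegral_Ioc_eq_mul (hF : Measurable F) {t : ℝ} (ht : 0 < t) :
    ∫⁻ s in Set.Ioc 0 t, F s = ENNReal.ofReal t * ∫⁻ ρ in Set.Ioc 0 1, F (ρ * t) := by
  have hind (ρ : ℝ) : (Set.Ioc 0 1).indicator (fun ρ => F (ρ * t)) ρ =
      (Set.Ioc 0 t).indicator F (t * ρ) := by
    simp only [Set.indicator_apply, Set.mem_Ioc, mul_comm t, mul_pos_iff_of_pos_right ht,
      mul_le_iff_le_one_left ht]
  rw [← lintegral_indicator measurableSet_Ioc, ← lintegral_indicator measurableSet_Ioc]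
  simp_rw [hind]
  rw [lintegral_comp_mul_left_of_pos (hF.indicator measurableSet_Ioc) ht, ← mul_assoc,
    ← ENNReal.ofReal_mul ht.le, mul_inv_cancel₀ ht.ne', ENNReal.ofReal_one, one_mul]

lemma besovNorm_setLIntegral_Ioc_le (hθ : 0 < θ) (hF : Measurable F) (hq : 1 ≤ q) :
    besovNorm θ q (fun t => ∫⁻ s in Set.Ioc 0 t, F s) ≤
      ENNReal.ofReal θ⁻¹ * besovNorm (θ - 1) q F := by
  refine (besovNorm_mono fun t ht => ?_).trans
    ((besovNorm_rpow_mul θ 1 q fun t => ∫⁻ ρ in Set.Ioc 0 1, F (ρ * t)).le.trans ?_)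
  · rw [setLIntegral_Ioc_eq_mul hF ht, Real.rpow_one]
  · rw [← lintegral_Ioc_zero_one_rpow hθ]
    exact besovNorm_lintegral_comp_mul_le measurable_id
      (ae_restrict_of_forall_mem measurableSet_Ioc fun ρ hρ => hρ.1) hF hq

lemma besovNorm_ofReal {q : ℝ} (hq : 0 < q) {u : ℝ → ℝ} (hu : ∀ t, 0 ≤ u t) :
    besovNorm θ (ENNReal.ofReal q) (fun t => ENNReal.ofReal (u t)) =
      (∫⁻ t in Set.Ioi 0, ENNReal.ofReal (t ^ (-θ * q - 1) * u t ^ q)) ^ (1 / q) := by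
  rw [besovNorm, eLpNorm_eq_lintegral_rpow_enorm_toReal (by simpa using hq) ENNReal.ofReal_ne_top,
    ENNReal.toReal_ofReal hq.le, lintegral_scaleMeasure, ← setLIntegral_eq_of_support_subset]
  · congr 1
    refine setLIntegral_congr_fun measurableSet_Ioi fun t (ht : 0 < t) => ?_
    have := hu t
    simp only [enorm_eq_self]
    rw [← ENNReal.ofReal_mul (by positivity), ENNReal.ofReal_rpow_of_nonneg (by positivity) hq.le,
      ← ENNReal.ofReal_mul (by positivity), Real.mul_rpow (by positivity) this,
      ← Real.rpow_mul ht.le, Real.rpow_sub_one ht.ne']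
    ring_nf
  · intro t ht
    rw [Function.mem_support, mul_ne_zero_iff, ENNReal.ofReal_ne_zero_iff, inv_pos] at ht
    exact ht.1

end BesovNorm

section Embedding

open scoped ENNReal

/-- The constant `C(θ)` in `HasHorizontalGradient.besovNorm_vmul_sub_le`: two geometric series over
dyadic scales, the Hardy factor `1/θ`, and the cost of averaging over the Poisson kernel. -/
noncomputable def besovConst (θ : ℝ) : ℝ≥0∞ :=
  3 * (1 - ENNReal.ofReal (2 ^ (θ - 1)))⁻¹ *
    (ENNReal.ofReal θ⁻¹ *
      ((1 - ENNReal.ofReal (2 ^ (θ - 1)))⁻¹ * (poissonMoment (1 / 2) * 2)))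

lemma besovConst_ne_top {θ : ℝ} (hθ : θ < 1) : besovConst θ ≠ ⊤ := by
  have hlt : ENNReal.ofReal (2 ^ (θ - 1)) < 1 :=
    ENNReal.ofReal_lt_one.2 (Real.rpow_lt_one_of_one_lt_of_neg one_lt_two (by linarith))
  have hK : (1 - ENNReal.ofReal (2 ^ (θ - 1)))⁻¹ ≠ ⊤ :=
    ENNReal.inv_ne_top.2 (tsub_pos_of_lt hlt).ne'
  have hM : poissonMoment (1 / 2) ≠ ⊤ := poissonMoment_ne_top (by norm_num) (by norm_num)
  unfold besovConst
  finiteness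

variable {X : Type*} [NormedAddCommGroup X] [NormedSpace ℝ X]
  {f A B : HR → X} {p q : ℝ≥0∞} {θ : ℝ}

lemma measurable_eLpNorm_conv_Pker_sub (hf : StronglyMeasurable f) :
    Measurable fun s => eLpNorm (fun h => conv (Pker s) f h - f h) p := by
  have hm := (stronglyMeasurable_uncurry_conv measurable_uncurry_Pker hf).sub
    (hf.comp_measurable measurable_snd)
  simp_rw [← eLpNorm_enorm fun h => conv _ f h - f h]
  exact measurable_eLpNorm_prod_right (ν := volume) hm.enorm p

variable [CompleteSpace X]

lemma besovNorm_vmul_sub_le_conv_Pker_sub (hf : BoundedMeasurable f) (hp : 1 ≤ p) (hq : 1 ≤ q)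
    (hfp : eLpNorm f p ≠ ⊤) :
    besovNorm θ q (fun t => eLpNorm (fun h => f (vmul t h) - f h) p) ≤
      3 * (1 - ENNReal.ofReal (2 ^ (θ - 1)))⁻¹ *
        besovNorm θ q (fun s => eLpNorm (fun h => conv (Pker s) f h - f h) p) := by
  set e : ℝ → ℝ≥0∞ := fun s => eLpNorm (fun h => conv (Pker s) f h - f h) p
  have hshift (F : ℝ → ℝ≥0∞) :
      besovNorm (θ - 1) q (fun t => ENNReal.ofReal t⁻¹ * F t) = besovNorm θ q F := by
    simpa [Real.rpow_neg_one] using besovNorm_rpow_mul (θ - 1) (-1) q F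
  have he : Measurable e := measurable_eLpNorm_conv_Pker_sub hf.stronglyMeasurable
  rw [← hshift, ← hshift e, mul_assoc]
  refine (besovNorm_le_mul (by simp) fun t ht =>
    ofReal_inv_mul_eLpNorm_vmul_sub_le_tsum hf hp hfp ht).trans ?_
  gcongr
  exact besovNorm_tsum_two_pow_mul_le (F := fun s => ENNReal.ofReal s⁻¹ * e s) (by fun_prop) hq

lemma besovNorm_conv_Pker_sub_le_conv_Qker (hθ : 0 < θ) (hf : Continuous f) {C : ℝ}
    (hC : ∀ h, ‖f h‖ ≤ C) (hp : 1 ≤ p) (hq : 1 ≤ q) :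
    besovNorm θ q (fun s => eLpNorm (fun h => conv (Pker s) f h - f h) p) ≤
      ENNReal.ofReal θ⁻¹ * besovNorm (θ - 1) q (fun s => eLpNorm (conv (Qker s) f) p) :=
  (besovNorm_mono fun _ ht => eLpNorm_conv_Pker_sub_le_setLIntegral hf hC hp ht).trans
    (besovNorm_setLIntegral_Ioc_le hθ (measurable_eLpNorm_conv_Qker hf.stronglyMeasurable) hq)

lemma HasHorizontalGradient.besovNorm_conv_Qker_le (H : HasHorizontalGradient f A B)
    (hf : BoundedMeasurable f) (hA : BoundedMeasurable A) (hB : BoundedMeasurable B)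
    (hp : 1 ≤ p) (hq : 1 ≤ q) (hfp : eLpNorm f p ≠ ⊤) :
    besovNorm θ q (fun s => eLpNorm (HR.conv (Qker s) f) p) ≤
      (1 - ENNReal.ofReal (2 ^ θ))⁻¹ * (poissonMoment (1 / 2) * 2 * besovNorm (θ - 1 / 2) q
        (fun s => eLpNorm (HR.conv (Qker s) A) p + eLpNorm (HR.conv (Qker s) B) p)) := by
  set φ : ℝ → ℝ≥0∞ := fun s => eLpNorm (HR.conv (Qker s) A) p + eLpNorm (HR.conv (Qker s) B) p
  have hφ : Measurable φ := (measurable_eLpNorm_conv_Qker hA.stronglyMeasurable).add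
    (measurable_eLpNorm_conv_Qker hB.stronglyMeasurable)
  have hM : poissonMoment (1 / 2) * 2 ≠ ⊤ :=
    ENNReal.mul_ne_top (poissonMoment_ne_top (by norm_num) (by norm_num)) (by simp)
  refine (besovNorm_mono fun s hs => H.eLpNorm_conv_Qker_le_tsum hf hA hB hp hfp hs).trans
    ((besovNorm_tsum_two_pow_mul_le (F := fun s => ENNReal.ofReal (s ^ (1 / 2 : ℝ)) *
      poissonMoment (1 / 2) * (2 * φ s)) (by fun_prop) hq).trans ?_)
  rw [← besovNorm_rpow_mul]
  gcongr
  exact besovNorm_le_mul hM fun s _ => by ring_nf; rfl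

theorem HasHorizontalGradient.besovNorm_vmul_sub_le (H : HasHorizontalGradient f A B)
    (hθ : 0 < θ) (hf : Continuous f) {C : ℝ} (hC : ∀ h, ‖f h‖ ≤ C) (hA : BoundedMeasurable A)
    (hB : BoundedMeasurable B) (hp : 1 ≤ p) (hq : 1 ≤ q) (hfp : eLpNorm f p ≠ ⊤) :
    besovNorm θ q (fun t => eLpNorm (fun h => f (vmul t h) - f h) p) ≤
      besovConst θ * besovNorm (θ - 3 / 2) q
        (fun s => eLpNorm (HR.conv (Qker s) A) p + eLpNorm (HR.conv (Qker s) B) p) := by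
  have hfm : BoundedMeasurable f := ⟨hf.stronglyMeasurable, C, hC⟩
  refine (besovNorm_vmul_sub_le_conv_Pker_sub hfm hp hq hfp).trans ?_
  rw [besovConst, mul_assoc _ (_ * _) (besovNorm _ _ _), show θ - 3 / 2 = θ - 1 - 1 / 2 by ring,
    mul_assoc _ (_ * _) (besovNorm _ _ _), mul_assoc _ (_ * _) (besovNorm _ _ _)]
  gcongr
  refine (besovNorm_conv_Pker_sub_le_conv_Qker hθ hf hC hp hq).trans ?_
  gcongr
  exact H.besovNorm_conv_Qker_le hfm hA hB hp hq hfp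

end Embedding

section Integrals

variable {α E : Type*} [MeasurableSpace α] [NormedAddCommGroup E] {μ : Measure α} {g k : α → E}
  {p : ℝ}

lemma eLpNorm_ofReal_eq_integral (hp : 0 < p) (hg : MemLp g (ENNReal.ofReal p) μ) :
    eLpNorm g (ENNReal.ofReal p) μ = ENNReal.ofReal ((∫ x, ‖g x‖ ^ p ∂μ) ^ (1 / p)) := by
  rw [hg.eLpNorm_eq_integral_rpow_norm (by simpa using hp) ENNReal.ofReal_ne_top,
    ENNReal.toReal_ofReal hp.le, one_div]

lemma integrable_norm_rpow_ofReal (hp : 0 < p) (hg : MemLp g (ENNReal.ofReal p) μ) :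
    Integrable (fun x => ‖g x‖ ^ p) μ := by
  simpa [hp.le] using
    hg.integrable_norm_rpow (by simpa using hp) ENNReal.ofReal_ne_top

lemma eLpNorm_add_eLpNorm_le_two_mul (hp : 0 < p) (hg : MemLp g (ENNReal.ofReal p) μ)
    (hk : MemLp k (ENNReal.ofReal p) μ) :
    eLpNorm g (ENNReal.ofReal p) μ + eLpNorm k (ENNReal.ofReal p) μ ≤
      2 * ENNReal.ofReal ((∫ x, (‖g x‖ ^ p + ‖k x‖ ^ p) ∂μ) ^ (1 / p)) := by
  have hgi := integrable_norm_rpow_ofReal hp hg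
  have hki := integrable_norm_rpow_ofReal hp hk
  rw [eLpNorm_ofReal_eq_integral hp hg, eLpNorm_ofReal_eq_integral hp hk, two_mul]
  have hg0 (x : α) : 0 ≤ ‖g x‖ ^ p := by positivity
  have hk0 (x : α) : 0 ≤ ‖k x‖ ^ p := by positivity
  gcongr ENNReal.ofReal (?_ ^ _) + ENNReal.ofReal (?_ ^ _)
  · exact integral_mono hgi (hgi.add hki) fun x => le_add_of_nonneg_right (hk0 x)
  · exact integral_mono hki (hgi.add hki) fun x => le_add_of_nonneg_left (hg0 x)

end Integrals

section Reformulation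

variable {X : Type*} [NormedAddCommGroup X] {f A B : HR → X} {p q : ℝ}

lemma besovNorm_vmul_sub_eq (hp : 0 < p) (hq : 0 < q) (hf : MemLp f (ENNReal.ofReal p)) :
    besovNorm (1 / 2) (ENNReal.ofReal q)
        (fun t => eLpNorm (fun h => f (vmul t h) - f h) (ENNReal.ofReal p)) =
      (∫⁻ t in Set.Ioi (0 : ℝ), ENNReal.ofReal
        ((∫ h : HR, ‖f (vmul t h) - f h‖ ^ p) ^ (q / p) / t ^ (1 + q / 2))) ^ (1 / q) := by
  have hdiff (t : ℝ) := eLpNorm_ofReal_eq_integral hp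
    ((hf.comp_measurePreserving (measurePreserving_vmul t)).sub hf)
  simp only [Function.comp_def, Pi.sub_def] at hdiff
  simp_rw [hdiff]
  rw [besovNorm_ofReal hq fun t => by positivity]
  refine congrArg (· ^ _) (setLIntegral_congr_fun measurableSet_Ioi fun t (ht : 0 < t) => ?_)
  have hI : 0 ≤ ∫ h : HR, ‖f (vmul t h) - f h‖ ^ p := integral_nonneg fun h => by positivity
  rw [← Real.rpow_mul hI, one_div_mul_eq_div, div_eq_mul_inv (_ ^ _), ← Real.rpow_neg ht.le,
    mul_comm]
  ring_nf

variable [NormedSpace ℝ X]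

lemma memLp_conv_Qker {p : ENNReal} {s : ℝ} (hs : 0 < s) (hf : StronglyMeasurable f)
    (hfp : MemLp f p) (hp : 1 ≤ p) : MemLp (conv (Qker s) f) p :=
  ⟨(stronglyMeasurable_conv measurable_uncurry_Qker.of_uncurry_left hf).aestronglyMeasurable,
    (eLpNorm_conv_Qker_le hs hf hp).trans_lt
      (ENNReal.mul_lt_top ENNReal.ofReal_lt_top hfp.eLpNorm_lt_top)⟩

lemma besovNorm_conv_Qker_add_le (hp : 1 ≤ p) (hq : 0 < q) (hA : StronglyMeasurable A)
    (hB : StronglyMeasurable B) (hAp : MemLp A (ENNReal.ofReal p))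
    (hBp : MemLp B (ENNReal.ofReal p)) :
    besovNorm (-1) (ENNReal.ofReal q) (fun t => eLpNorm (conv (Qker t) A) (ENNReal.ofReal p) +
        eLpNorm (conv (Qker t) B) (ENNReal.ofReal p)) ≤
      2 * (∫⁻ t in Set.Ioi (0 : ℝ), ENNReal.ofReal (t ^ (q - 1) *
        ((∫ h : HR, (‖conv (Qker t) A h‖ ^ p + ‖conv (Qker t) B h‖ ^ p)) ^ (1 / p)) ^ q))
          ^ (1 / q) := by
  have hp1 : 1 ≤ ENNReal.ofReal p := ENNReal.one_le_ofReal.2 hp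
  refine (besovNorm_le_mul (c := 2) (by simp) fun t ht =>
    eLpNorm_add_eLpNorm_le_two_mul (zero_lt_one.trans_le hp) (memLp_conv_Qker ht hA hAp hp1)
      (memLp_conv_Qker ht hB hBp hp1)).trans_eq ?_
  rw [besovNorm_ofReal hq fun t => by positivity]
  simp only [neg_neg, one_mul]

lemma hasCompactSupport_da (hf : HasCompactSupport f) : HasCompactSupport (da f) :=
  hf.fderiv_apply ℝ _

lemma hasCompactSupport_db (hf : HasCompactSupport f) : HasCompactSupport (db f) :=
  .add (hf.fderiv_apply ℝ _) ((hf.fderiv_apply ℝ _).smul_left (f := fun h : HR => h.1))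

end Reformulation

end HR

open HR in
theorem vertical_controlled_by_g_function_of_gradient_general :
    ∃ C : ℝ, 0 < C ∧
      ∀ p q : ℝ, 1 ≤ p → 1 ≤ q →
        ∀ (X : Type*) [NormedAddCommGroup X] [NormedSpace ℝ X] [CompleteSpace X],
          ∀ f : HR → X, ContDiff ℝ 1 f →
            (∃ M, ∀ h, ‖f h‖ ≤ M) → (∃ M, ∀ h, ‖da f h‖ ≤ M) → (∃ M, ∀ h, ‖db f h‖ ≤ M) →
            MemLp f (ENNReal.ofReal p) → MemLp (da f) (ENNReal.ofReal p) →
            MemLp (db f) (ENNReal.ofReal p) →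
            (∫⁻ t in Set.Ioi (0 : ℝ),
                ENNReal.ofReal
                  ((∫ h : HR, ‖f (vmul t h) - f h‖ ^ p) ^ (q / p) / t ^ (1 + q / 2))) ^ (1 / q) ≤
              ENNReal.ofReal C *
                (∫⁻ t in Set.Ioi (0 : ℝ),
                  ENNReal.ofReal
                    (t ^ (q - 1) *
                      ((∫ h : HR, (‖conv (Qker t) (da f) h‖ ^ p + ‖conv (Qker t) (db f) h‖ ^ p))
                          ^ (1 / p)) ^ q)) ^ (1 / q) := by
  have hconst : besovConst (1 / 2) * 2 ≠ ⊤ :=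
    ENNReal.mul_ne_top (besovConst_ne_top (by norm_num)) (by simp)
  refine ⟨(besovConst (1 / 2) * 2).toReal + 1, by positivity,
    fun p q hp hq X _ _ _ f hf ⟨M, hM⟩ hda hdb hfp hdap hdbp => ?_⟩
  have hp0 := zero_lt_one.trans_le hp
  have hq0 := zero_lt_one.trans_le hq
  have hA := (continuous_da hf).stronglyMeasurable
  have hB := (continuous_db hf).stronglyMeasurable
  rw [← besovNorm_vmul_sub_eq hp0 hq0 hfp]
  refine ((hasHorizontalGradient_of_contDiff hf).besovNorm_vmul_sub_le (by norm_num) hf.continuous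
    hM ⟨hA, hda⟩ ⟨hB, hdb⟩ (ENNReal.one_le_ofReal.2 hp) (ENNReal.one_le_ofReal.2 hq)
    hfp.eLpNorm_ne_top).trans ?_
  rw [show (1 / 2 - 3 / 2 : ℝ) = -1 by norm_num]
  refine (mul_le_mul_right (besovNorm_conv_Qker_add_le hp hq0 hA hB hdap hdbp) _).trans ?_
  rw [← mul_assoc]
  gcongr
  exact (ENNReal.le_ofReal_iff_toReal_le hconst (by positivity)).2
    (le_add_of_nonneg_right zero_le_one)

open HR in
/-- Proposition 2.3: the vertical Besov-type seminorm is controlled by the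
`g`-function of the horizontal gradient. -/
theorem vertical_controlled_by_g_function_of_gradient :
    ∃ C : ℝ, 0 < C ∧
      ∀ p q : ℝ, 1 ≤ p → 1 ≤ q →
        ∀ (X : Type) [NormedAddCommGroup X] [NormedSpace ℝ X] [CompleteSpace X],
          ∀ f : HR → X, ContDiff ℝ (⊤ : ℕ∞) f → HasCompactSupport f →
            (∫⁻ t in Set.Ioi (0 : ℝ),
                ENNReal.ofReal
                  ((∫ h : HR, ‖f (vmul t h) - f h‖ ^ p) ^ (q / p) / t ^ (1 + q / 2))) ^ (1 / q) ≤
              ENNReal.ofReal C *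
                (∫⁻ t in Set.Ioi (0 : ℝ),
                  ENNReal.ofReal
                    (t ^ (q - 1) *
                      ((∫ h : HR, (‖conv (Qker t) (da f) h‖ ^ p + ‖conv (Qker t) (db f) h‖ ^ p))
                          ^ (1 / p)) ^ q)) ^ (1 / q) := by
  obtain ⟨C, hC, h⟩ := vertical_controlled_by_g_function_of_gradient_general
  refine ⟨C, hC, fun p q hp hq X _ _ _ f hf hfc => ?_⟩
  have hf1 : ContDiff ℝ 1 f := hf.of_le (mod_cast le_top)
  have hfa := hasCompactSupport_da hfc
  have hfb := hasCompactSupport_db hfc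
  have hca := continuous_da hf1
  have hcb := continuous_db hf1
  exact h p q hp hq X f hf1 (hf.continuous.bounded_above_of_compact_support hfc)
    (hca.bounded_above_of_compact_support hfa) (hcb.bounded_above_of_compact_support hfb)
    (hf.continuous.memLp_of_hasCompactSupport hfc) (hca.memLp_of_hasCompactSupport hfa)
    (hcb.memLp_of_hasCompactSupport hfb)
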